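/- Let n ≥ 4 be an integer. For every ν with 0 ≤ ν ≤ δ there is a constant c > 0 such that for all t ≥ 1 and all x ∈ ℝ, (|x|/t^α)^ν |φ(x,t)| ≤ c t^{−γ}; moreover there is a constant c' > 0 such that for all t ≥ 1 and all x ∈ ℝ, |2 ū(x,t) φ(x,t) + φ(x,t)²| ≤ c' t^{−2γ}. -/

import Mathlib

noncomputable def kap : ℝ := 1 / Real.sqrt Real.pi

noncomputable def kap3 : ℝ := -kap / 12

noncomputable def gam (n : ℕ) : ℝ := 1 / (2 * (n : ℝ) + 1)

noncomputable def eps (n : ℕ) : ℝ := 1 / ((n : ℝ) - 1)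

noncomputable def alph (n : ℕ) : ℝ := 1 / 2 - gam n

noncomputable def del (n : ℕ) : ℝ := ((n : ℝ) + 2) / ((n : ℝ) - 1)

noncomputable def lam (n : ℕ) : ℝ :=
  (del n * (del n + 1) / (2 * kap) ^ n) ^ (1 / ((n : ℝ) - 1))

noncomputable def lam0 (n : ℕ) : ℝ :=
  (lam n / (2 * kap)) *
    (-2 * (n : ℝ) * kap3 * del n * (del n + 1) - kap * (del n - 2 * eps n)) /
    (((n : ℝ) - 1) * del n * (del n + 1) + 2 * (2 * del n - 1))

def IsReactiveProfile (n : ℕ) (η : ℝ → ℝ) : Prop :=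
  ContDiffOn ℝ 2 η (Set.Ici 0) ∧
  (∀ z ∈ Set.Ici (0:ℝ), 0 < η z) ∧
  (∀ z ∈ Set.Ici (0:ℝ),
    derivWithin (derivWithin η (Set.Ici 0)) (Set.Ici 0) z
      = (2 * kap * z * η z + (η z) ^ 2) ^ n) ∧
  derivWithin η (Set.Ici 0) 0 = -kap ∧
  Filter.Tendsto η Filter.atTop (nhds 0)

/-- The corrector h: C² on [0,∞), satisfies
h'' + γη + αzη' = n(2κzη+η²)^{n−1}((2κz+2η)h + 2κ₃z³η), h'(0) = 0,
h(z) − λ₀ z^{2−δ} → 0 as z → ∞. -/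
def IsCorrector (n : ℕ) (η h : ℝ → ℝ) : Prop :=
  ContDiffOn ℝ 2 h (Set.Ici 0) ∧
  (∀ z ∈ Set.Ici (0:ℝ),
    derivWithin (derivWithin h (Set.Ici 0)) (Set.Ici 0) z + gam n * η z
        + alph n * z * derivWithin η (Set.Ici 0) z
      = (n : ℝ) * (2 * kap * z * η z + (η z) ^ 2) ^ (n - 1)
          * ((2 * kap * z + 2 * η z) * h z + 2 * kap3 * z ^ 3 * η z)) ∧
  derivWithin h (Set.Ici 0) 0 = 0 ∧
  Filter.Tendsto (fun z : ℝ => h z - lam0 n * z ^ (2 - del n)) Filter.atTop (nhds 0)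

noncomputable def mu1 (y : ℝ) : ℝ :=
  (2 / Real.sqrt Real.pi) * ∫ σ in (0:ℝ)..(y / 2), Real.exp (-σ ^ 2)

def IsDiffusiveProfile (n : ℕ) (μ : ℝ → ℝ) : Prop :=
  ContDiffOn ℝ 2 μ (Set.Ioi 0) ∧
  (∀ y ∈ Set.Ioi (0:ℝ), 0 < μ y) ∧
  (∀ y ∈ Set.Ioi (0:ℝ),
    deriv (deriv μ) y + y / 2 * deriv μ y + eps n * μ y = (2 * mu1 y * μ y) ^ n) ∧
  Filter.Tendsto (fun y : ℝ => y ^ del n * μ y) (nhdsWithin 0 (Set.Ioi 0)) (nhds (lam n)) ∧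
  Filter.Tendsto (fun y : ℝ => y ^ (2 * eps n) * μ y) Filter.atTop (nhds 0)

/-- u(x,t) = −erf(x/(2√t)). -/
noncomputable def uu (x t : ℝ) : ℝ := -mu1 (x / Real.sqrt t)

/-- ū(x,t) = μ₁(|x|/√t). -/
noncomputable def ubar (x t : ℝ) : ℝ := mu1 (|x| / Real.sqrt t)

/-- φ₁(z) = η(z) − λ z^{−δ}. -/
noncomputable def phi1 (n : ℕ) (η : ℝ → ℝ) (z : ℝ) : ℝ := η z - lam n * z ^ (-(del n))

/-- φ₂(z) = −λ₀ z^{2−δ} + h(z). -/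
noncomputable def phi2 (n : ℕ) (h : ℝ → ℝ) (z : ℝ) : ℝ := -lam0 n * z ^ (2 - del n) + h z

/-- μ₃(y) = μ₂(y) − λ y^{−δ}. -/
noncomputable def mu3 (n : ℕ) (μ : ℝ → ℝ) (y : ℝ) : ℝ := μ y - lam n * y ^ (-(del n))

/-- The asymptotic profile v_∞. -/
noncomputable def vInf (n : ℕ) (η μ h : ℝ → ℝ) (x t : ℝ) : ℝ :=
  mu1 (|x| / Real.sqrt t) + t ^ (-(eps n)) * μ (|x| / Real.sqrt t)
    + t ^ (-(gam n)) * phi1 n η (|x| / t ^ alph n)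
    + t ^ (-(3 * gam n)) * phi2 n h (|x| / t ^ alph n)

/-- φ(x,t) = t^{−γ} η(|z|) + t^{−ε} μ₃(|y|) + t^{−3γ} φ₂(|z|). -/
noncomputable def phiFun (n : ℕ) (η μ h : ℝ → ℝ) (x t : ℝ) : ℝ :=
  t ^ (-(gam n)) * η (|x| / t ^ alph n) + t ^ (-(eps n)) * mu3 n μ (|x| / Real.sqrt t)
    + t ^ (-(3 * gam n)) * phi2 n h (|x| / t ^ alph n)

/-!
The power `P(z) = λ z^{-δ}` solves `P'' = (2κzP)ⁿ` exactly, and `η` at `∞` and `μ₂` at `0` are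
both asymptotic to it. Subtracting `P` from `η` or `μ₂`, and the `λ₀` term from `h`, leaves a
function `w` with `z²w'' + c(z) z w' = a(z) w + R`, an equation of Euler type with
`a → nδ(δ+1)`. Powers of `z` whose Euler exponent is below this limit are barriers, so the maximum
principle transfers the size of `R` to `w`: thus `η - P = O(z^{-δ-2})` and `φ₂ = O(z^{-δ})` at
`∞`, while `μ₃ = O(1)` at `0` because `δ ≤ 2`. At `∞` the drift `y/2` makes `μ₂` decay faster
than any power. Hence `η`, `φ₂` and `μ₃` are all bounded by a constant times `min(1, z^{-δ})`.
Since `z = y t^γ` and `γ(1 + δ) = ε`, the term `t^{-ε} μ₃(y)` obeys the same bound in `z` as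
`t^{-γ} η(z)`; the quadratic bound follows from the cases `ν = 0, 1` and `0 ≤ ū ≤ κ z t^{-γ}`.
-/

open Set Filter Topology Asymptotics

/-! ### Second derivatives -/

/-- `f' x` is the derivative of `f` at `x` and `f'' x` is that of `f'` at `x`. Asked for at all
points of an open set, this says that `f'` and `f''` are the first two derivatives of `f` there. -/
def HasDerivAt₂ (f f' f'' : ℝ → ℝ) (x : ℝ) : Prop :=
  HasDerivAt f (f' x) x ∧ HasDerivAt f' (f'' x) x

namespace HasDerivAt₂

variable {f f' f'' g g' g'' : ℝ → ℝ} {x : ℝ}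

lemma add (hf : HasDerivAt₂ f f' f'' x) (hg : HasDerivAt₂ g g' g'' x) :
    HasDerivAt₂ (fun z => f z + g z) (fun z => f' z + g' z) (fun z => f'' z + g'' z) x :=
  ⟨hf.1.add hg.1, hf.2.add hg.2⟩

lemma neg (hf : HasDerivAt₂ f f' f'' x) :
    HasDerivAt₂ (fun z => -f z) (fun z => -f' z) (fun z => -f'' z) x :=
  ⟨hf.1.neg, hf.2.neg⟩

lemma sub (hf : HasDerivAt₂ f f' f'' x) (hg : HasDerivAt₂ g g' g'' x) :
    HasDerivAt₂ (fun z => f z - g z) (fun z => f' z - g' z) (fun z => f'' z - g'' z) x :=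
  ⟨hf.1.sub hg.1, hf.2.sub hg.2⟩

lemma const_add (k : ℝ) (hf : HasDerivAt₂ f f' f'' x) :
    HasDerivAt₂ (fun z => k + f z) f' f'' x :=
  ⟨hf.1.const_add k, hf.2⟩

lemma const_mul (k : ℝ) (hf : HasDerivAt₂ f f' f'' x) :
    HasDerivAt₂ (fun z => k * f z) (fun z => k * f' z) (fun z => k * f'' z) x :=
  ⟨hf.1.const_mul k, hf.2.const_mul k⟩

lemma mul (hf : HasDerivAt₂ f f' f'' x) (hg : HasDerivAt₂ g g' g'' x) :
    HasDerivAt₂ (fun z => f z * g z) (fun z => f' z * g z + f z * g' z)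
      (fun z => f'' z * g z + 2 * (f' z * g' z) + f z * g'' z) x := by
  exact ⟨hf.1.mul hg.1, ((hf.2.mul hg.1).add (hf.1.mul hg.2)).congr_deriv (by ring)⟩

lemma comp_add_const {b : ℝ} (hf : HasDerivAt₂ f f' f'' (x + b)) :
    HasDerivAt₂ (fun z => f (z + b)) (fun z => f' (z + b)) (fun z => f'' (z + b)) x :=
  ⟨hf.1.comp_add_const x b, hf.2.comp_add_const x b⟩

end HasDerivAt₂

lemma hasDerivAt₂_rpow {z : ℝ} (hz : 0 < z) (q : ℝ) :
    HasDerivAt₂ (fun z => z ^ q) (fun z => q * z ^ q / z) (fun z => q * (q - 1) * z ^ q / z ^ 2)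
      z := by
  have hpow : HasDerivAt (fun z : ℝ => z ^ q) (q * z ^ q / z) z := by
    convert Real.hasDerivAt_rpow_const (p := q) (Or.inl hz.ne') using 1
    rw [Real.rpow_sub_one hz.ne', mul_div_assoc]
  refine ⟨hpow, ?_⟩
  refine ((hpow.const_mul q).div (hasDerivAt_id' z) hz.ne').congr_deriv ?_
  field_simp

lemma hasDerivAt₂_of_contDiffOn_Ici {f : ℝ → ℝ} {a z : ℝ} (hf : ContDiffOn ℝ 2 f (Ici a))
    (hz : a < z) :
    HasDerivAt₂ f (derivWithin f (Ici a)) (derivWithin (derivWithin f (Ici a)) (Ici a)) z := by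
  have hmem : Ici a ∈ 𝓝 z := Ici_mem_nhds hz
  have hf' : ContDiffOn ℝ 1 (derivWithin f (Ici a)) (Ici a) :=
    hf.derivWithin (uniqueDiffOn_Ici a) (by norm_num)
  exact ⟨(hf.differentiableOn (by norm_num) z hz.le).hasDerivWithinAt.hasDerivAt hmem,
    (hf'.differentiableOn (by norm_num) z hz.le).hasDerivWithinAt.hasDerivAt hmem⟩

lemma hasDerivAt₂_of_contDiffOn_isOpen {f : ℝ → ℝ} {s : Set ℝ} {z : ℝ} (hf : ContDiffOn ℝ 2 f s)
    (hs : IsOpen s) (hz : z ∈ s) : HasDerivAt₂ f (deriv f) (deriv (deriv f)) z := by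
  have hf' : ContDiffOn ℝ 1 (deriv f) s := hf.deriv_of_isOpen hs (by norm_num)
  exact ⟨(hf.differentiableOn (by norm_num)).hasDerivAt (hs.mem_nhds hz),
    (hf'.differentiableOn (by norm_num)).hasDerivAt (hs.mem_nhds hz)⟩

/-! ### Maximum and comparison principles -/

lemma second_deriv_nonpos_of_isLocalMax {w w' : ℝ → ℝ} {w'' x : ℝ} (hmax : IsLocalMax w x)
    (hw : ∀ᶠ z in 𝓝 x, HasDerivAt w (w' z) z) (hw' : HasDerivAt w' w'' x) : w'' ≤ 0 := by
  by_contra! hpos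
  have hderiv : deriv w =ᶠ[𝓝 x] w' := hw.mono fun z hz => hz.deriv
  have hderiv₂ : deriv (deriv w) x = w'' := by rw [hderiv.deriv_eq, hw'.deriv]
  have hmin : IsLocalMin w x :=
    isLocalMin_of_deriv_deriv_pos (hderiv₂ ▸ hpos) hmax.deriv_eq_zero hw.self_of_nhds.continuousAt
  have hconst : w =ᶠ[𝓝 x] fun _ => w x := by
    filter_upwards [hmax, hmin] with z h₁ h₂ using le_antisymm h₁ h₂
  have hzero : deriv (deriv w) x = 0 := by
    rw [hconst.deriv.deriv_eq]
    simp only [deriv_const', deriv_const]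
  exact hpos.ne' (hderiv₂ ▸ hzero)

lemma nonpos_of_second_deriv_pos {w w' w'' : ℝ → ℝ} {s : Set ℝ} (hs : s.OrdConnected)
    (hw : ∀ z ∈ s, HasDerivAt₂ w w' w'' z)
    (hleft : ∀ z ∈ s, ∀ m > 0, ∃ a ∈ s, a ≤ z ∧ w a ≤ m)
    (hright : ∀ z ∈ s, ∀ m > 0, ∃ b ∈ s, z ≤ b ∧ w b ≤ m)
    (hpos : ∀ z ∈ s, 0 < w z → w' z = 0 → 0 < w'' z) : ∀ z ∈ s, w z ≤ 0 := by
  intro z hz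
  by_contra! hwz
  obtain ⟨a, has, haz, hwa⟩ := hleft z hz (w z / 2) (half_pos hwz)
  obtain ⟨b, hbs, hzb, hwb⟩ := hright z hz (w z / 2) (half_pos hwz)
  have hsub : Icc a b ⊆ s := hs.out has hbs
  have hcont : ContinuousOn w (Icc a b) := fun x hx =>
    (hw x (hsub hx)).1.continuousAt.continuousWithinAt
  obtain ⟨x, hx, hmax⟩ := isCompact_Icc.exists_isMaxOn ⟨z, haz, hzb⟩ hcont
  have hwx : w z ≤ w x := hmax ⟨haz, hzb⟩
  have hax : a < x := hx.1.lt_of_ne fun h => by subst h; linarith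
  have hxb : x < b := hx.2.lt_of_ne fun h => by subst h; linarith
  have hnhds : Icc a b ∈ 𝓝 x := Icc_mem_nhds hax hxb
  have hloc : IsLocalMax w x := hmax.isLocalMax hnhds
  have hnonpos : w'' x ≤ 0 := second_deriv_nonpos_of_isLocalMax hloc
    (mem_of_superset hnhds fun y hy => (hw y (hsub hy)).1) (hw x (hsub hx)).2
  exact hnonpos.not_gt <|
    hpos x (hsub hx) (hwz.trans_le hwx) (hloc.hasDerivAt_eq_zero (hw x (hsub hx)).1)

lemma le_of_second_deriv_lt {u u' u'' v v' v'' : ℝ → ℝ}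
    (hu : ∀ z > 0, HasDerivAt₂ u u' u'' z) (hv : ∀ z > 0, HasDerivAt₂ v v' v'' z)
    (hzero : ∀ᶠ z in 𝓝[>] 0, u z ≤ v z) (hutop : Tendsto u atTop (𝓝 0))
    (hvtop : Tendsto v atTop (𝓝 0)) (hlt : ∀ z > 0, v z < u z → v'' z < u'' z) :
    ∀ z > 0, u z ≤ v z := by
  have hdiff : Tendsto (fun z => u z - v z) atTop (𝓝 0) := by simpa using hutop.sub hvtop
  have hnonpos := nonpos_of_second_deriv_pos (s := Ioi 0) ordConnected_Ioi
    (fun z hz => (hu z hz).sub (hv z hz)) ?_ ?_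
    fun z hz hpos _ => sub_pos.2 (hlt z hz (sub_pos.1 hpos))
  · exact fun z hz => sub_nonpos.1 (hnonpos z hz)
  · intro z hz m hm
    obtain ⟨a, hle, ha, haz⟩ := (hzero.and (Ioo_mem_nhdsGT hz)).exists
    exact ⟨a, ha, haz.le, by linarith⟩
  · intro z hz m hm
    obtain ⟨b, hlt, hzb⟩ := ((hdiff.eventually_lt_const hm).and (eventually_ge_atTop z)).exists
    exact ⟨b, hz.trans_le hzb, hzb, hlt.le⟩

/-! ### Barriers for second-order equations of Euler type -/

lemma eventually_le_rpow_of_euler_inequality {e e' e'' a c : ℝ → ℝ} {A C p : ℝ}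
    (hA : p * (p + 1) < A) (he : ∀ᶠ z in atTop, HasDerivAt₂ e e' e'' z)
    (hlim : Tendsto e atTop (𝓝 0)) (ha : ∀ᶠ z in atTop, 0 ≤ a z)
    (hac : ∀ᶠ z in atTop, A ≤ a z + p * c z)
    (hode : ∀ᶠ z in atTop, a z * e z - C * z ^ (-p) ≤ z ^ 2 * e'' z + c z * (z * e' z)) :
    ∃ K, ∀ᶠ z in atTop, e z ≤ K * z ^ (-p) := by
  obtain ⟨Z, hZ⟩ := eventually_atTop.1
    ((he.and (ha.and (hac.and hode))).and (eventually_gt_atTop (0 : ℝ)))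
  have hZ0 : 0 < Z := (hZ Z le_rfl).2
  obtain ⟨K, hK0, hKC, hKZ⟩ := ((eventually_gt_atTop (0 : ℝ)).and
    ((eventually_gt_atTop (C / (A - p * (p + 1)))).and
      (eventually_ge_atTop (e Z / Z ^ (-p))))).exists
  rw [div_lt_iff₀ (sub_pos.2 hA)] at hKC
  rw [div_le_iff₀ (Real.rpow_pos_of_pos hZ0 _)] at hKZ
  have hbarrier := nonpos_of_second_deriv_pos (s := Ici Z) ordConnected_Ici
    (fun z hz => (hZ z hz).1.1.sub ((hasDerivAt₂_rpow (hZ z hz).2 (-p)).const_mul K)) ?_ ?_ ?_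
  · exact ⟨K, eventually_atTop.2 ⟨Z, fun z hz => sub_nonpos.1 (hbarrier z hz)⟩⟩
  · exact fun z hz m hm => ⟨Z, self_mem_Ici, hz, (sub_nonpos.2 hKZ).trans hm.le⟩
  · intro z hz m hm
    obtain ⟨b, hb, hzb⟩ := ((hlim.eventually_lt_const hm).and (eventually_ge_atTop z)).exists
    have hpow : 0 < b ^ (-p) := Real.rpow_pos_of_pos (hZ0.trans_le (hz.trans hzb)) _
    exact ⟨b, mem_Ici.2 (hz.trans hzb), hzb, by nlinarith⟩
  · intro z hz hpos hcrit
    obtain ⟨⟨-, ha, hac, hode⟩, hz0⟩ := hZ z hz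
    have hpow : 0 < z ^ (-p) := Real.rpow_pos_of_pos hz0 _
    have hslope : z * e' z = -(p * (K * z ^ (-p))) := by
      rw [sub_eq_zero.1 hcrit]
      field_simp
    have hmono : a z * (K * z ^ (-p)) ≤ a z * e z :=
      mul_le_mul_of_nonneg_left (sub_pos.1 hpos).le ha
    have hcoef : A * (K * z ^ (-p)) ≤ (a z + p * c z) * (K * z ^ (-p)) := by gcongr
    have hsource : C * z ^ (-p) < K * (A - p * (p + 1)) * z ^ (-p) := by gcongr
    rw [hslope] at hode
    refine sub_pos.2 ((mul_lt_mul_iff_right₀ (pow_pos hz0 2)).1 ?_)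
    calc z ^ 2 * (K * (-p * (-p - 1) * z ^ (-p) / z ^ 2))
        = p * (p + 1) * (K * z ^ (-p)) := by field_simp; ring
      _ < z ^ 2 * e'' z := by linarith

lemma isBigO_of_eventually_le_of_neg_le {α : Type*} {l : Filter α} {f g : α → ℝ}
    (hg : ∀ᶠ z in l, 0 ≤ g z) (hle : ∃ K, ∀ᶠ z in l, f z ≤ K * g z)
    (hge : ∃ K, ∀ᶠ z in l, -f z ≤ K * g z) : f =O[l] g := by
  obtain ⟨K₁, h₁⟩ := hle
  obtain ⟨K₂, h₂⟩ := hge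
  refine IsBigO.of_bound (max K₁ K₂) ?_
  filter_upwards [h₁, h₂, hg] with z hz₁ hz₂ hgz
  rw [Real.norm_eq_abs, Real.norm_of_nonneg hgz]
  exact abs_le'.2 ⟨hz₁.trans (by gcongr; exact le_max_left _ _),
    hz₂.trans (by gcongr; exact le_max_right _ _)⟩

lemma isBigO_rpow_of_euler_equation {e e' e'' a R : ℝ → ℝ} {A p : ℝ} (hp : 0 ≤ p)
    (hA : p * (p + 1) < A) (he : ∀ᶠ z in atTop, HasDerivAt₂ e e' e'' z)
    (hlim : Tendsto e atTop (𝓝 0)) (ha : Tendsto a atTop (𝓝 A))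
    (hR : R =O[atTop] fun z => z ^ (-p))
    (hode : ∀ᶠ z in atTop, z ^ 2 * e'' z = a z * e z + R z) :
    e =O[atTop] fun z => z ^ (-p) := by
  obtain ⟨C, hC⟩ := hR.bound
  obtain ⟨A', hA'p, hA'A⟩ := exists_between hA
  have hA' : 0 ≤ A' := (by positivity : 0 ≤ p * (p + 1)).trans hA'p.le
  have hRC : ∀ᶠ z in atTop, |R z| ≤ C * z ^ (-p) := by
    filter_upwards [hC, eventually_gt_atTop 0] with z hz hz0
    rwa [Real.norm_eq_abs, Real.norm_of_nonneg (Real.rpow_nonneg hz0.le _)] at hz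
  have haA : ∀ᶠ z in atTop, A' ≤ a z := ha.eventually_const_le hA'A
  refine isBigO_of_eventually_le_of_neg_le
    ((eventually_ge_atTop 0).mono fun z hz => Real.rpow_nonneg hz _)
    (eventually_le_rpow_of_euler_inequality (a := a) (c := 0) (C := C) hA'p he hlim ?_ ?_ ?_)
    (eventually_le_rpow_of_euler_inequality (a := a) (c := 0) (C := C) hA'p
      (he.mono fun z => HasDerivAt₂.neg) (by simpa using hlim.neg) ?_ ?_ ?_)
  iterate 2
    · exact haA.mono fun z hz => hA'.trans hz
    · simpa using haA
    · filter_upwards [hode, hRC] with z hz hRz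
      rw [abs_le] at hRz
      simp only [Pi.zero_apply, zero_mul, add_zero]
      linarith

lemma le_add_rpow_of_euler_inequality {w w' w'' a c : ℝ → ℝ} {A C K Y d θ : ℝ} (hd : 0 ≤ d)
    (hA : d * (d + 1) < A) (hY : 0 < Y) (hθ : 0 < θ) (hK : 0 ≤ K) (hKC : C < K * A)
    (hw : ∀ y ∈ Ioc 0 Y, HasDerivAt₂ w w' w'' y) (ha : ∀ y ∈ Ioc 0 Y, A ≤ a y)
    (hc : ∀ y ∈ Ioc 0 Y, 0 ≤ c y)
    (hode : ∀ y ∈ Ioc 0 Y, a y * w y - C ≤ y ^ 2 * w'' y + c y * (y * w' y))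
    (hwY : w Y ≤ K) (hzero : ∀ᶠ y in 𝓝[>] 0, w y ≤ θ * y ^ (-d)) :
    ∀ y ∈ Ioc 0 Y, w y ≤ K + θ * y ^ (-d) := by
  suffices ∀ y ∈ Ioc 0 Y, w y - (K + θ * y ^ (-d)) ≤ 0 from fun y hy => sub_nonpos.1 (this y hy)
  refine nonpos_of_second_deriv_pos ordConnected_Ioc
    (fun y hy => (hw y hy).sub (((hasDerivAt₂_rpow hy.1 (-d)).const_mul θ).const_add K)) ?_ ?_ ?_
  · intro y hy m hm
    obtain ⟨b, hb, hb0, hby⟩ := (hzero.and (Ioo_mem_nhdsGT hy.1)).exists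
    exact ⟨b, ⟨hb0, (hby.trans_le hy.2).le⟩, hby.le, by linarith⟩
  · intro y hy m hm
    have hpow : 0 < θ * Y ^ (-d) := mul_pos hθ (Real.rpow_pos_of_pos hY _)
    exact ⟨Y, ⟨hY, le_rfl⟩, hy.2, by linarith⟩
  · intro y hy hpos hcrit
    have hA₀ : 0 ≤ A := (by positivity : 0 ≤ d * (d + 1)).trans hA.le
    have hy₀ : 0 < y := hy.1
    have : 0 < θ * y ^ (-d) := mul_pos hθ (Real.rpow_pos_of_pos hy₀ _)
    have hslope : y * w' y = -(d * (θ * y ^ (-d))) := by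
      rw [sub_eq_zero.1 hcrit]
      field_simp
    have hmono : A * (K + θ * y ^ (-d)) ≤ a y * w y := by
      gcongr
      exacts [hA₀.trans (ha y hy), ha y hy, (sub_pos.1 hpos).le]
    have hdrift : 0 ≤ c y * (d * (θ * y ^ (-d))) := mul_nonneg (hc y hy) (by positivity)
    have hsource : d * (d + 1) * (θ * y ^ (-d)) < A * (θ * y ^ (-d)) := by gcongr
    have hineq := hode y hy
    rw [hslope] at hineq
    refine sub_pos.2 ((mul_lt_mul_iff_right₀ (pow_pos hy₀ 2)).1 ?_)
    calc y ^ 2 * (θ * (-d * (-d - 1) * y ^ (-d) / y ^ 2))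
        = d * (d + 1) * (θ * y ^ (-d)) := by field_simp; ring
      _ < y ^ 2 * w'' y := by linarith

lemma eventually_le_const_of_euler_inequality {w w' w'' a c : ℝ → ℝ} {A C d : ℝ} (hd : 0 ≤ d)
    (hA : d * (d + 1) < A) (hw : ∀ᶠ y in 𝓝[>] 0, HasDerivAt₂ w w' w'' y)
    (hlim : w =o[𝓝[>] 0] fun y => y ^ (-d)) (ha : ∀ᶠ y in 𝓝[>] 0, A ≤ a y)
    (hc : ∀ᶠ y in 𝓝[>] 0, 0 ≤ c y)
    (hode : ∀ᶠ y in 𝓝[>] 0, a y * w y - C ≤ y ^ 2 * w'' y + c y * (y * w' y)) :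
    ∃ K, ∀ᶠ y in 𝓝[>] 0, w y ≤ K := by
  obtain ⟨Y, hY₀ : 0 < Y, hY⟩ :=
    mem_nhdsGT_iff_exists_Ioc_subset.1 (hw.and (ha.and (hc.and hode)))
  have hA₀ : 0 < A := (by positivity : 0 ≤ d * (d + 1)).trans_lt hA
  obtain ⟨K, hK₀, hKC, hKY⟩ := ((eventually_ge_atTop (0 : ℝ)).and
    ((eventually_gt_atTop (C / A)).and (eventually_ge_atTop (w Y)))).exists
  rw [div_lt_iff₀ hA₀] at hKC
  have hzero : ∀ θ > 0, ∀ᶠ y in 𝓝[>] 0, w y ≤ θ * y ^ (-d) := fun θ hθ => by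
    filter_upwards [hlim.bound hθ, eventually_mem_nhdsWithin] with y hy (hy₀ : 0 < y)
    rw [Real.norm_of_nonneg (Real.rpow_nonneg hy₀.le _)] at hy
    exact (Real.le_norm_self _).trans hy
  refine ⟨K, mem_of_superset (Ioc_mem_nhdsGT hY₀) fun y hy => ?_⟩
  have hlim₀ : Tendsto (fun θ => K + θ * y ^ (-d)) (𝓝[>] 0) (𝓝 K) := by
    have : Continuous fun θ : ℝ => K + θ * y ^ (-d) := by fun_prop
    simpa using (this.tendsto 0).mono_left nhdsWithin_le_nhds
  exact ge_of_tendsto hlim₀ (eventually_mem_nhdsWithin.mono fun θ hθ =>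
    le_add_rpow_of_euler_inequality hd hA hY₀ hθ hK₀ hKC (fun y hy => (hY hy).1)
      (fun y hy => (hY hy).2.1) (fun y hy => (hY hy).2.2.1) (fun y hy => (hY hy).2.2.2)
      hKY (hzero θ hθ) y hy)

lemma isBigO_one_of_euler_equation {w w' w'' a c R : ℝ → ℝ} {A d : ℝ} (hd : 0 ≤ d)
    (hA : d * (d + 1) < A) (hw : ∀ᶠ y in 𝓝[>] 0, HasDerivAt₂ w w' w'' y)
    (hlim : w =o[𝓝[>] 0] fun y => y ^ (-d)) (ha : Tendsto a (𝓝[>] 0) (𝓝 A))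
    (hc : ∀ᶠ y in 𝓝[>] 0, 0 ≤ c y) (hR : R =O[𝓝[>] 0] (1 : ℝ → ℝ))
    (hode : ∀ᶠ y in 𝓝[>] 0, y ^ 2 * w'' y + c y * (y * w' y) = a y * w y + R y) :
    w =O[𝓝[>] 0] (1 : ℝ → ℝ) := by
  obtain ⟨C, hC⟩ := hR.bound
  obtain ⟨A', hA'd, hA'A⟩ := exists_between hA
  have haA : ∀ᶠ y in 𝓝[>] 0, A' ≤ a y := ha.eventually_const_le hA'A
  refine isBigO_of_eventually_le_of_neg_le (.of_forall fun _ => zero_le_one) ?_ ?_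
  · simpa using eventually_le_const_of_euler_inequality (C := C) hd hA'd hw hlim haA hc (by
      filter_upwards [hode, hC] with y hy hRy
      simp only [Pi.one_apply, norm_one, mul_one, Real.norm_eq_abs, abs_le] at hRy
      linarith)
  · simpa using eventually_le_const_of_euler_inequality (C := C) hd hA'd
      (hw.mono fun y => HasDerivAt₂.neg) hlim.neg_left haA hc (by
        filter_upwards [hode, hC] with y hy hRy
        simp only [Pi.one_apply, norm_one, mul_one, Real.norm_eq_abs, abs_le] at hRy
        linarith)

/-! ### Interpolation, weighted bounds and perturbations of the constant `1` -/

lemma abs_mul_deriv_le_of_dyadic_bounds {e e' e'' : ℝ → ℝ} {z K K' : ℝ} (hz : 0 < z)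
    (he : ∀ x ∈ Icc z (2 * z), HasDerivAt₂ e e' e'' x) (hK : ∀ x ∈ Icc z (2 * z), |e x| ≤ K)
    (hK' : ∀ x ∈ Icc z (2 * z), |x ^ 2 * e'' x| ≤ K') : |z * e' z| ≤ 2 * K + K' := by
  obtain ⟨ξ, hξ, hslope⟩ := exists_hasDerivAt_eq_slope e e' (show z < 2 * z by linarith)
    (fun x hx => (he x hx).1.continuousAt.continuousWithinAt)
    fun x hx => (he x (Ioo_subset_Icc_self hx)).1
  obtain ⟨ζ, hζ, hslope'⟩ := exists_hasDerivAt_eq_slope e' e'' hξ.1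
    (fun x hx => (he x ⟨hx.1, hx.2.trans hξ.2.le⟩).2.continuousAt.continuousWithinAt)
    fun x hx => (he x ⟨hx.1.le, hx.2.le.trans hξ.2.le⟩).2
  have hζz : ζ ∈ Icc z (2 * z) := ⟨hζ.1.le, (hζ.2.trans hξ.2).le⟩
  have hsecant : |z * e' ξ| ≤ 2 * K := by
    have : z * e' ξ = e (2 * z) - e z := by rw [hslope]; field_simp; ring
    rw [this]
    calc |e (2 * z) - e z| ≤ |e (2 * z)| + |e z| := abs_sub _ _
      _ ≤ K + K := add_le_add (hK _ ⟨by linarith, le_rfl⟩) (hK _ ⟨le_rfl, by linarith⟩)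
      _ = 2 * K := by ring
  have hvariation : |z * (e' ξ - e' z)| ≤ K' := by
    have : e' ξ - e' z = (ξ - z) * e'' ζ := by
      rw [hslope', mul_div_cancel₀ _ (sub_pos.2 hξ.1).ne']
    rw [this, ← mul_assoc, abs_mul]
    calc |z * (ξ - z)| * |e'' ζ| ≤ ζ ^ 2 * |e'' ζ| := by
          rw [abs_of_nonneg (mul_nonneg hz.le (sub_pos.2 hξ.1).le)]
          gcongr
          nlinarith [hξ.2, hζ.1]
      _ = |ζ ^ 2 * e'' ζ| := by rw [abs_mul, abs_of_nonneg (sq_nonneg ζ)]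
      _ ≤ K' := hK' ζ hζz
  calc |z * e' z| = |z * e' ξ - z * (e' ξ - e' z)| := by congr 1; ring
    _ ≤ |z * e' ξ| + |z * (e' ξ - e' z)| := abs_sub _ _
    _ ≤ 2 * K + K' := add_le_add hsecant hvariation

lemma isBigO_mul_deriv_rpow {e e' e'' : ℝ → ℝ} {p : ℝ} (hp : 0 ≤ p)
    (he : ∀ᶠ z in atTop, HasDerivAt₂ e e' e'' z) (hbound : e =O[atTop] fun z => z ^ (-p))
    (hbound₂ : (fun z => z ^ 2 * e'' z) =O[atTop] fun z => z ^ (-p)) :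
    (fun z => z * e' z) =O[atTop] fun z => z ^ (-p) := by
  obtain ⟨K, hK0, hK⟩ := hbound.exists_nonneg
  obtain ⟨K', hK'0, hK'⟩ := hbound₂.exists_nonneg
  obtain ⟨Z, hZ⟩ := eventually_atTop.1 (he.and (hK.bound.and hK'.bound))
  refine IsBigO.of_bound (2 * K + K') ?_
  filter_upwards [eventually_ge_atTop Z, eventually_gt_atTop 0] with z hzZ hz
  have hdecay : ∀ x ∈ Icc z (2 * z), ‖x ^ (-p)‖ ≤ z ^ (-p) := fun x hx => by
    rw [Real.norm_of_nonneg (Real.rpow_nonneg (hz.le.trans hx.1) _)]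
    exact Real.rpow_le_rpow_of_nonpos hz hx.1 (neg_nonpos.2 hp)
  rw [Real.norm_eq_abs, Real.norm_of_nonneg (Real.rpow_nonneg hz.le _), add_mul, mul_assoc]
  refine abs_mul_deriv_le_of_dyadic_bounds hz (fun x hx => (hZ x (hzZ.trans hx.1)).1)
    (fun x hx => (hZ x (hzZ.trans hx.1)).2.1.trans ?_)
    fun x hx => (hZ x (hzZ.trans hx.1)).2.2.trans ?_
  · gcongr; exact hdecay x hx
  · gcongr; exact hdecay x hx

lemma exists_bound_of_continuousOn_Ioi {g : ℝ → ℝ} (hcont : ContinuousOn g (Ioi 0))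
    (hzero : g =O[𝓝[>] 0] (1 : ℝ → ℝ)) (htop : g =O[atTop] (1 : ℝ → ℝ)) :
    ∃ C, ∀ z > 0, |g z| ≤ C := by
  obtain ⟨C₁, h₁⟩ := hzero.bound
  obtain ⟨C₂, h₂⟩ := htop.bound
  simp only [Pi.one_apply, norm_one, mul_one, Real.norm_eq_abs] at h₁ h₂
  obtain ⟨a, ha0, ha⟩ := mem_nhdsGT_iff_exists_Ioc_subset.1 h₁
  obtain ⟨b, hb⟩ := eventually_atTop.1 h₂
  obtain ⟨C₃, h₃⟩ := isCompact_Icc.exists_bound_of_continuousOn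
    (hcont.mono fun z hz => lt_of_lt_of_le ha0 hz.1 : ContinuousOn g (Icc a b))
  refine ⟨max C₁ (max C₂ C₃), fun z hz => ?_⟩
  rcases le_total z a with hza | hza
  · exact (ha ⟨hz, hza⟩).trans (le_max_left _ _)
  · rcases le_total b z with hzb | hzb
    · exact (hb z hzb).trans ((le_max_left _ _).trans (le_max_right _ _))
    · exact (h₃ z ⟨hza, hzb⟩).trans ((le_max_right _ _).trans (le_max_right _ _))

lemma isBigO_mul_rpow {l : Filter ℝ} {f g : ℝ → ℝ} (hl : ∀ᶠ z in l, 0 < z) {a b c : ℝ}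
    (hf : f =O[l] fun z => z ^ a) (hg : g =O[l] fun z => z ^ b) (habc : a + b = c) :
    (fun z => f z * g z) =O[l] fun z => z ^ c :=
  (hf.mul hg).congr' .rfl (hl.mono fun z hz => by simp only [← Real.rpow_add hz, habc])

lemma rpow_isBigO_rpow_atTop {p q : ℝ} (hpq : p ≤ q) :
    (fun z : ℝ => z ^ p) =O[atTop] fun z => z ^ q := by
  refine IsBigO.of_bound 1 ?_
  filter_upwards [eventually_ge_atTop 1] with z hz
  rw [Real.norm_of_nonneg (by positivity), Real.norm_of_nonneg (by positivity), one_mul]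
  exact Real.rpow_le_rpow_of_exponent_le hz hpq

lemma rpow_neg_two_isBigO_one : (fun z : ℝ => z ^ (-2 : ℝ)) =O[atTop] (1 : ℝ → ℝ) :=
  (tendsto_rpow_neg_atTop two_pos).isBigO_one ℝ

lemma rpow_isBigO_one_nhdsGT_zero {q : ℝ} (hq : 0 ≤ q) :
    (fun y : ℝ => y ^ q) =O[𝓝[>] 0] (1 : ℝ → ℝ) :=
  (((Real.continuous_rpow_const hq).tendsto 0).mono_left nhdsWithin_le_nhds).isBigO_one ℝ

lemma exists_rpow_mul_abs_le {f : ℝ → ℝ} {d : ℝ} (hd : 0 ≤ d) (hcont : ContinuousOn f (Ioi 0))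
    (hzero : f =O[𝓝[>] 0] (1 : ℝ → ℝ)) (htop : f =O[atTop] fun z => z ^ (-d)) :
    ∃ C, ∀ ν ∈ Icc 0 d, ∀ z ≥ 0, z ^ ν * |f z| ≤ C := by
  have hbig : (fun z : ℝ => z ^ d * f z) =O[atTop] (1 : ℝ → ℝ) := by
    refine ((isBigO_refl _ _).mul htop).congr' .rfl ?_
    filter_upwards [eventually_gt_atTop 0] with z hz
    rw [← Real.rpow_add hz, add_neg_cancel, Real.rpow_zero, Pi.one_apply]
  have hsmall : f =O[atTop] (1 : ℝ → ℝ) :=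
    (htop.trans (rpow_isBigO_rpow_atTop (neg_nonpos.2 hd))).congr_right Real.rpow_zero
  obtain ⟨C, hC⟩ := exists_bound_of_continuousOn_Ioi (g := fun z => f z + z ^ d * f z)
    (hcont.add ((Real.continuous_rpow_const hd).continuousOn.mul hcont))
    (hzero.add (((rpow_isBigO_one_nhdsGT_zero hd).mul hzero).congr_right fun _ => one_mul _))
    (hsmall.add hbig)
  refine ⟨max |f 0| C, fun ν hν z hz => ?_⟩
  rcases hz.eq_or_lt with rfl | hz
  · exact (mul_le_of_le_one_left (abs_nonneg _)
      (Real.rpow_le_one le_rfl zero_le_one hν.1)).trans (le_max_left _ _)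
  · have hweight : z ^ ν ≤ 1 + z ^ d := by
      rcases le_total z 1 with hz1 | hz1
      · linarith [Real.rpow_le_one hz.le hz1 hν.1, Real.rpow_nonneg hz.le d]
      · linarith [Real.rpow_le_rpow_of_exponent_le hz1 hν.2]
    calc z ^ ν * |f z| ≤ (1 + z ^ d) * |f z| := by gcongr
      _ = |f z + z ^ d * f z| := by
        rw [← one_add_mul, abs_mul, abs_of_nonneg (a := 1 + z ^ d) (by positivity)]
      _ ≤ max |f 0| C := (hC z hz).trans (le_max_right _ _)

section SubOne

variable {α : Type*} {l : Filter α} {f g s : α → ℝ}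

lemma isBigO_mul_sub_one (hf : (fun x => f x - 1) =O[l] s) (hg : (fun x => g x - 1) =O[l] s)
    (hs : s =O[l] (1 : α → ℝ)) : (fun x => f x * g x - 1) =O[l] s := by
  have hg1 : g =O[l] (1 : α → ℝ) := by
    simpa using (hg.trans hs).add (isBigO_refl (1 : α → ℝ) l)
  have hmul : (fun x => (f x - 1) * g x) =O[l] s := by simpa using hf.mul hg1
  exact (hmul.add hg).congr_left fun x => by ring

lemma isBigO_pow_sub_one (hf : (fun x => f x - 1) =O[l] s) (hs : s =O[l] (1 : α → ℝ)) (k : ℕ) :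
    (fun x => f x ^ k - 1) =O[l] s := by
  induction k with
  | zero => simpa using isBigO_zero s l
  | succ k ih =>
    simp only [pow_succ]
    exact isBigO_mul_sub_one ih hf hs

lemma tendsto_geom_sum_of_tendsto_one (hf : Tendsto f l (𝓝 1)) (k : ℕ) :
    Tendsto (fun x => ∑ i ∈ Finset.range k, f x ^ i) l (𝓝 k) := by
  simpa using tendsto_finsetSum (Finset.range k) fun i _ => hf.pow i

end SubOne

/-! ### The constants and the singular profile -/

lemma kap_pos : 0 < kap := by
  unfold kap
  positivity

lemma gam_pos (n : ℕ) : 0 < gam n := by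
  unfold gam
  positivity

section Constants

variable {n : ℕ}

lemma eps_pos (hn : 1 < n) : 0 < eps n := by
  have : (1 : ℝ) < n := mod_cast hn
  exact one_div_pos.2 (by linarith)

lemma sub_one_mul_del (hn : 1 < n) : ((n : ℝ) - 1) * del n = n + 2 := by
  have : (1 : ℝ) < n := mod_cast hn
  exact mul_div_cancel₀ _ (by linarith)

lemma one_lt_del (hn : 1 < n) : 1 < del n := by
  have : (1 : ℝ) < n := mod_cast hn
  exact (one_lt_div (by linarith)).2 (by linarith)

lemma del_pos (hn : 1 < n) : 0 < del n := zero_lt_one.trans (one_lt_del hn)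

lemma del_le_two (hn : 4 ≤ n) : del n ≤ 2 := by
  have : (4 : ℝ) ≤ n := mod_cast hn
  exact (div_le_iff₀ (by linarith)).2 (by linarith)

lemma del_mul_succ_lt (hn : 1 < n) : del n * (del n + 1) < n * (del n * (del n + 1)) := by
  have := del_pos hn
  exact lt_mul_of_one_lt_left (by positivity) (mod_cast hn)

lemma del_add_two_mul_succ_lt (hn : 3 ≤ n) :
    (del n + 2) * (del n + 2 + 1) < n * (del n * (del n + 1)) := by
  have hn' : (3 : ℝ) ≤ n := mod_cast hn
  have hdel := sub_one_mul_del (n := n) (by omega)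
  have hpos := del_pos (n := n) (by omega)
  calc (del n + 2) * (del n + 2 + 1)
      < (del n + 2) * (del n + 2 + 1) + (2 * n - 2 - del n) := by nlinarith
    _ = n * (del n * (del n + 1)) := by linear_combination (-del n - 2) * hdel

lemma gam_mul_one_add_del (hn : 1 < n) : gam n * (1 + del n) = eps n := by
  have : (n : ℝ) - 1 ≠ 0 := sub_ne_zero.2 (by exact_mod_cast hn.ne')
  unfold gam del eps
  field_simp
  ring

lemma lam_pos (hn : 1 < n) : 0 < lam n := by
  have := del_pos hn
  have := kap_pos
  unfold lam
  positivity

lemma lam_pow_mul (hn : 1 < n) : lam n ^ (n - 1) * (2 * kap) ^ n = del n * (del n + 1) := by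
  have hdel := del_pos hn
  have hkap := kap_pos
  have hcast : ((n - 1 : ℕ) : ℝ) = (n : ℝ) - 1 := by push_cast [hn.le]; rfl
  have hne : (n : ℝ) - 1 ≠ 0 := sub_ne_zero.2 (by exact_mod_cast hn.ne')
  rw [lam, ← Real.rpow_natCast, ← Real.rpow_mul (by positivity), hcast, one_div_mul_cancel hne,
    Real.rpow_one, div_mul_cancel₀ _ (by positivity)]

/- The `z^{2-δ}` terms of the corrector equation cancel exactly for this value of `λ₀`. -/
lemma lam0_balance (hn : 1 < n) :
    n * (del n * (del n + 1)) * (lam0 n - lam n / 12) - gam n * lam n + alph n * del n * lam n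
      = lam0 n * ((2 - del n) * (1 - del n)) := by
  have hn' : (1 : ℝ) < n := mod_cast hn
  have hkap := kap_pos
  have hdel := one_lt_del hn
  have hden : 0 < ((n : ℝ) - 1) * del n * (del n + 1) + 2 * (2 * del n - 1) := by
    have : 0 < (n : ℝ) - 1 := by linarith
    have : 0 < 2 * del n - 1 := by linarith
    positivity
  have hlam0 : lam0 n * (((n : ℝ) - 1) * del n * (del n + 1) + 2 * (2 * del n - 1))
      = lam n / 2 * ((n : ℝ) / 6 * del n * (del n + 1) - (del n - 2 * eps n)) := by
    unfold lam0
    rw [div_mul_cancel₀ _ hden.ne']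
    unfold kap3
    field_simp
    ring
  rw [← gam_mul_one_add_del hn] at hlam0
  unfold alph
  linear_combination hlam0

end Constants

/-- The singular profile `λ z^{-δ}`: the exact solution of `P'' = (2κzP)^n` on `(0, ∞)` that governs
both `η` at `∞` and `μ₂` at `0`. -/
noncomputable def singularProfile (n : ℕ) (z : ℝ) : ℝ := lam n * z ^ (-del n)

/-- The ratio of a profile to the singular profile; it tends to `1` for `η` at `∞` and for `μ₂` at
`0`. -/
noncomputable def profileRatio (n : ℕ) (f : ℝ → ℝ) (z : ℝ) : ℝ := f z / singularProfile n z

section SingularProfile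

variable {n : ℕ} {z : ℝ}

lemma singularProfile_pos (hn : 1 < n) (hz : 0 < z) : 0 < singularProfile n z :=
  mul_pos (lam_pos hn) (Real.rpow_pos_of_pos hz _)

lemma hasDerivAt₂_singularProfile (n : ℕ) (hz : 0 < z) :
    HasDerivAt₂ (singularProfile n) (fun z => -del n * singularProfile n z / z)
      (fun z => del n * (del n + 1) * singularProfile n z / z ^ 2) z := by
  convert (hasDerivAt₂_rpow hz (-del n)).const_mul (lam n) using 2 <;>
  · unfold singularProfile
    ring

lemma singularProfile_isBigO (n : ℕ) (l : Filter ℝ) :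
    singularProfile n =O[l] fun z => z ^ (-del n) :=
  isBigO_const_mul_self (lam n) _ l

lemma tendsto_singularProfile_atTop (hn : 1 < n) : Tendsto (singularProfile n) atTop (𝓝 0) :=
  (singularProfile_isBigO n atTop).trans_tendsto (tendsto_rpow_neg_atTop (del_pos hn))

lemma tendsto_singularProfile_nhdsGT_zero (hn : 1 < n) :
    Tendsto (singularProfile n) (𝓝[>] 0) atTop :=
  (tendsto_rpow_neg_nhdsGT_zero (neg_neg_of_pos (del_pos hn))).const_mul_atTop (lam_pos hn)

lemma sq_mul_singularProfile_pow (hn : 1 < n) (hz : 0 < z) :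
    z ^ 2 * (2 * kap * z * singularProfile n z) ^ n
      = del n * (del n + 1) * singularProfile n z := by
  have hlam : lam n ^ n = lam n ^ (n - 1) * lam n := by
    rw [← pow_succ, Nat.sub_add_cancel hn.le]
  have hpow : z ^ 2 * z ^ n * (z ^ (-del n)) ^ n = z ^ (-del n) := by
    simp only [← Real.rpow_natCast, ← Real.rpow_mul hz.le, ← Real.rpow_add hz]
    congr 1
    push_cast
    linarith [sub_one_mul_del hn]
  calc z ^ 2 * (2 * kap * z * (lam n * z ^ (-del n))) ^ n
      = (2 * kap) ^ n * lam n ^ n * (z ^ 2 * z ^ n * (z ^ (-del n)) ^ n) := by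
        rw [mul_pow, mul_pow, mul_pow (lam n)]; ring
    _ = lam n ^ (n - 1) * (2 * kap) ^ n * (lam n * z ^ (-del n)) := by rw [hpow, hlam]; ring
    _ = del n * (del n + 1) * (lam n * z ^ (-del n)) := by rw [lam_pow_mul hn]

lemma sq_mul_singularProfile_pow_pred (hn : 1 < n) (hz : 0 < z) :
    z ^ 2 * (2 * kap * z * singularProfile n z) ^ (n - 1) * (2 * kap * z)
      = del n * (del n + 1) := by
  refine mul_right_cancel₀ (singularProfile_pos hn hz).ne' ?_
  rw [← sq_mul_singularProfile_pow hn hz,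
    ← mul_pow_sub_one (by omega : n ≠ 0) (2 * kap * z * singularProfile n z)]
  ring

lemma profileRatio_mul (hn : 1 < n) (hz : 0 < z) (f : ℝ → ℝ) :
    profileRatio n f z * singularProfile n z = f z :=
  div_mul_cancel₀ _ (singularProfile_pos hn hz).ne'

lemma sq_mul_pow_sub_singularProfile (hn : 1 < n) (hz : 0 < z) (f : ℝ → ℝ) (σ : ℝ) :
    z ^ 2 * (2 * kap * z * f z * σ) ^ n - del n * (del n + 1) * singularProfile n z
      = del n * (del n + 1) * σ ^ n * (∑ i ∈ Finset.range n, profileRatio n f z ^ i)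
          * (f z - singularProfile n z)
        + del n * (del n + 1) * singularProfile n z * (σ ^ n - 1) := by
  have hgeom := geom_sum_mul (profileRatio n f z) n
  have hsource := sq_mul_singularProfile_pow hn hz
  rw [← profileRatio_mul hn hz f]
  calc z ^ 2 * (2 * kap * z * (profileRatio n f z * singularProfile n z) * σ) ^ n
        - del n * (del n + 1) * singularProfile n z
      = z ^ 2 * (2 * kap * z * singularProfile n z) ^ n * (profileRatio n f z ^ n * σ ^ n)
        - del n * (del n + 1) * singularProfile n z := by
        rw [← mul_pow, mul_assoc (z ^ 2), ← mul_pow]; ring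
    _ = _ := by
      rw [hsource]
      linear_combination -(del n * (del n + 1) * singularProfile n z * σ ^ n) * hgeom

end SingularProfile

/-! ### The reactive profile -/

/-- The factor by which the reaction term `2κzη + η²` exceeds its leading part `2κzη`. -/
noncomputable def reactiveFactor (η : ℝ → ℝ) (z : ℝ) : ℝ := 1 + η z / (2 * kap * z)

lemma reaction_eq_mul_reactiveFactor (η : ℝ → ℝ) {z : ℝ} (hz : 0 < z) :
    2 * kap * z * η z + η z ^ 2 = 2 * kap * z * η z * reactiveFactor η z := by
  have := kap_pos
  unfold reactiveFactor
  field_simp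

lemma singularProfile_mul_isBigO (n : ℕ) {s : ℝ → ℝ}
    (hs : s =O[atTop] fun z => z ^ (-2 : ℝ)) :
    (fun z => del n * (del n + 1) * singularProfile n z * s z) =O[atTop]
      fun z => z ^ (-(del n + 2)) :=
  isBigO_mul_rpow (eventually_gt_atTop 0)
    ((singularProfile_isBigO n atTop).const_mul_left _) hs (by ring)

namespace IsReactiveProfile

variable {n : ℕ} {η : ℝ → ℝ}

lemma hasDerivAt₂ (hη : IsReactiveProfile n η) {z : ℝ} (hz : 0 < z) :
    HasDerivAt₂ η (derivWithin η (Ici 0)) (fun z => (2 * kap * z * η z + η z ^ 2) ^ n) z := by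
  have := hasDerivAt₂_of_contDiffOn_Ici hη.1 hz
  rwa [HasDerivAt₂, hη.2.2.1 z hz.le] at this

lemma tendsto_nhdsGT_zero (hη : IsReactiveProfile n η) : Tendsto η (𝓝[>] 0) (𝓝 (η 0)) :=
  (hη.1.continuousOn 0 self_mem_Ici).mono_left (nhdsWithin_mono _ Ioi_subset_Ici_self)

lemma pos (hη : IsReactiveProfile n η) {z : ℝ} (hz : 0 < z) : 0 < η z := hη.2.1 z hz.le

lemma tendsto_atTop (hη : IsReactiveProfile n η) : Tendsto η atTop (𝓝 0) := hη.2.2.2.2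

lemma exists_le (hη : IsReactiveProfile n η) : ∃ M, ∀ z > 0, η z ≤ M := by
  obtain ⟨M, hM⟩ := exists_bound_of_continuousOn_Ioi (hη.1.continuousOn.mono Ioi_subset_Ici_self)
    (hη.tendsto_nhdsGT_zero.isBigO_one ℝ) (hη.tendsto_atTop.isBigO_one ℝ)
  exact ⟨M, fun z hz => (le_abs_self _).trans (hM z hz)⟩

lemma le_singularProfile (hn : 1 < n) (hη : IsReactiveProfile n η) :
    ∀ z > 0, η z ≤ singularProfile n z := by
  refine le_of_second_deriv_lt (fun z => hη.hasDerivAt₂)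
    (fun z => hasDerivAt₂_singularProfile n) ?_ hη.tendsto_atTop
    (tendsto_singularProfile_atTop hn) fun z hz hlt => ?_
  · filter_upwards [hη.tendsto_nhdsGT_zero.eventually_lt_const (lt_add_one (η 0)),
      (tendsto_singularProfile_nhdsGT_zero hn).eventually_ge_atTop (η 0 + 1)] with z h₁ h₂
    exact h₁.le.trans h₂
  · have := kap_pos
    have hP := singularProfile_pos hn hz
    calc del n * (del n + 1) * singularProfile n z / z ^ 2
        = (2 * kap * z * singularProfile n z) ^ n := by
          rw [← sq_mul_singularProfile_pow hn hz, mul_div_cancel_left₀ _ (pow_pos hz 2).ne']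
      _ < (2 * kap * z * η z + η z ^ 2) ^ n := by
          refine pow_lt_pow_left₀ ?_ (by positivity) (by omega)
          have : 2 * kap * z * singularProfile n z < 2 * kap * z * η z := by gcongr
          linarith [sq_nonneg (η z)]

/- The shifted profile `P(z + b)` solves `P'' = (2κ(z + b)P)^n`, hence is a subsolution below
`η` as soon as `η ≤ 2κb`. -/
lemma exists_shift_singularProfile_le (hn : 1 < n) (hη : IsReactiveProfile n η) :
    ∃ b > 0, ∀ z > 0, singularProfile n (z + b) ≤ η z := by
  have hkap := kap_pos
  obtain ⟨M, hM⟩ := hη.exists_le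
  obtain ⟨b, hb, hMb, hPb⟩ := ((eventually_gt_atTop (0 : ℝ)).and
    ((eventually_ge_atTop (M / (2 * kap))).and
      ((tendsto_singularProfile_atTop hn).eventually_lt_const (hη.2.1 0 self_mem_Ici)))).exists
  rw [div_le_iff₀ (by positivity)] at hMb
  have hshift : Tendsto (fun z => singularProfile n (z + b)) (𝓝[>] 0)
      (𝓝 (singularProfile n b)) := by
    have : ContinuousAt (fun z => singularProfile n (z + b)) 0 :=
      (hasDerivAt₂_singularProfile n (by simpa using hb)).comp_add_const.1.continuousAt
    simpa using this.tendsto.mono_left nhdsWithin_le_nhds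
  refine ⟨b, hb, le_of_second_deriv_lt
    (fun z hz => (hasDerivAt₂_singularProfile n (add_pos hz hb)).comp_add_const)
    (fun z => hη.hasDerivAt₂) ?_
    ((tendsto_singularProfile_atTop hn).comp (tendsto_atTop_add_const_right _ b tendsto_id))
    hη.tendsto_atTop fun z hz hlt => ?_⟩
  · filter_upwards [hshift.eventually_lt hη.tendsto_nhdsGT_zero hPb] with z hz using hz.le
  · have hzb : 0 < z + b := add_pos hz hb
    have hηz := hη.pos hz
    calc (2 * kap * z * η z + η z ^ 2) ^ n
        ≤ (2 * kap * (z + b) * η z) ^ n := by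
          have := mul_le_mul_of_nonneg_left ((hM z hz).trans hMb) hηz.le
          gcongr
          linarith
      _ < (2 * kap * (z + b) * singularProfile n (z + b)) ^ n := by gcongr
      _ = del n * (del n + 1) * singularProfile n (z + b) / (z + b) ^ 2 := by
          rw [← sq_mul_singularProfile_pow hn hzb, mul_div_cancel_left₀ _ (pow_pos hzb 2).ne']

lemma tendsto_profileRatio (hn : 1 < n) (hη : IsReactiveProfile n η) :
    Tendsto (profileRatio n η) atTop (𝓝 1) := by
  obtain ⟨b, hb, hlower⟩ := hη.exists_shift_singularProfile_le hn
  have hshift : Tendsto (fun z : ℝ => (1 + b / z) ^ (-del n)) atTop (𝓝 1) := by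
    have : Tendsto (fun z : ℝ => 1 + b / z) atTop (𝓝 1) := by
      simpa using (tendsto_id.const_div_atTop b).const_add 1
    simpa using this.rpow_const (p := -del n) (Or.inl one_ne_zero)
  refine tendsto_of_tendsto_of_tendsto_of_le_of_le' hshift tendsto_const_nhds ?_ ?_ <;>
    filter_upwards [eventually_gt_atTop 0] with z hz
  · rw [profileRatio, le_div_iff₀ (singularProfile_pos hn hz)]
    refine le_trans (le_of_eq ?_) (hlower z hz)
    rw [singularProfile, singularProfile, mul_left_comm,
      ← Real.mul_rpow (by positivity) hz.le]
    congr 2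
    field_simp
  · exact (div_le_one (singularProfile_pos hn hz)).2 (hη.le_singularProfile hn z hz)

lemma isBigO_rpow (hn : 1 < n) (hη : IsReactiveProfile n η) :
    η =O[atTop] fun z => z ^ (-del n) := by
  refine IsBigO.trans (IsBigO.of_bound 1 ?_) (singularProfile_isBigO n atTop)
  filter_upwards [eventually_gt_atTop 0] with z hz
  rw [one_mul, Real.norm_of_nonneg (hη.pos hz).le]
  exact (hη.le_singularProfile hn z hz).trans (le_abs_self _)

lemma reactiveFactor_sub_one_isBigO (hn : 1 < n) (hη : IsReactiveProfile n η) :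
    (fun z => reactiveFactor η z - 1) =O[atTop] fun z => z ^ (-2 : ℝ) := by
  have hinv : (fun z : ℝ => (2 * kap)⁻¹ * z⁻¹) =O[atTop] fun z => z ^ (-1 : ℝ) :=
    (isBigO_const_mul_self _ _ _).congr_right fun z => (Real.rpow_neg_one z).symm
  refine ((isBigO_mul_rpow (eventually_gt_atTop 0) (hη.isBigO_rpow hn) hinv rfl).trans
    (rpow_isBigO_rpow_atTop (by linarith [one_lt_del hn]))).congr_left fun z => ?_
  rw [reactiveFactor, ← mul_inv]
  ring

lemma tendsto_reactiveFactor (hn : 1 < n) (hη : IsReactiveProfile n η) :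
    Tendsto (reactiveFactor η) atTop (𝓝 1) :=
  tendsto_sub_nhds_zero_iff.1 <|
    (hη.reactiveFactor_sub_one_isBigO hn).trans_tendsto (tendsto_rpow_neg_atTop two_pos)

lemma hasDerivAt₂_sub_singularProfile (hη : IsReactiveProfile n η) {z : ℝ} (hz : 0 < z) :
    HasDerivAt₂ (fun z => η z - singularProfile n z)
      (fun z => derivWithin η (Ici 0) z + del n * singularProfile n z / z)
      (fun z => (2 * kap * z * η z + η z ^ 2) ^ n
        - del n * (del n + 1) * singularProfile n z / z ^ 2) z := by
  convert (hη.hasDerivAt₂ hz).sub (hasDerivAt₂_singularProfile n hz) using 2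
  ring

lemma sub_singularProfile_isBigO (hn : 3 ≤ n) (hη : IsReactiveProfile n η) :
    (fun z => η z - singularProfile n z) =O[atTop] fun z => z ^ (-(del n + 2)) := by
  have hn₁ : 1 < n := by omega
  have hdel := del_pos hn₁
  have hlim : Tendsto (fun z => η z - singularProfile n z) atTop (𝓝 0) := by
    simpa using hη.tendsto_atTop.sub (tendsto_singularProfile_atTop hn₁)
  have hcoef : Tendsto (fun z => del n * (del n + 1) * reactiveFactor η z ^ n
      * ∑ i ∈ Finset.range n, profileRatio n η z ^ i) atTop (𝓝 (n * (del n * (del n + 1)))) := by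
    simpa only [one_pow, mul_one, mul_comm (n : ℝ)] using
      (((hη.tendsto_reactiveFactor hn₁).pow n).const_mul (del n * (del n + 1))).mul
        (tendsto_geom_sum_of_tendsto_one (hη.tendsto_profileRatio hn₁) n)
  refine isBigO_rpow_of_euler_equation (by positivity) (del_add_two_mul_succ_lt hn)
    ((eventually_gt_atTop 0).mono fun z => hη.hasDerivAt₂_sub_singularProfile) hlim hcoef
    (singularProfile_mul_isBigO n (isBigO_pow_sub_one (hη.reactiveFactor_sub_one_isBigO hn₁)
      rpow_neg_two_isBigO_one n)) ?_
  filter_upwards [eventually_gt_atTop 0] with z hz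
  rw [← sq_mul_pow_sub_singularProfile hn₁ hz, ← reaction_eq_mul_reactiveFactor η hz]
  field_simp

lemma profileRatio_sub_one_isBigO (hn : 3 ≤ n) (hη : IsReactiveProfile n η) :
    (fun z => profileRatio n η z - 1) =O[atTop] fun z => z ^ (-2 : ℝ) := by
  have hn₁ : 1 < n := by omega
  have hinv : (fun z : ℝ => (lam n)⁻¹ * z ^ del n) =O[atTop] fun z => z ^ del n :=
    isBigO_const_mul_self _ _ _
  refine (isBigO_mul_rpow (eventually_gt_atTop 0) (hη.sub_singularProfile_isBigO hn)
    hinv (by ring)).congr' ?_ .rfl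
  filter_upwards [eventually_gt_atTop 0] with z hz
  have hlam := (lam_pos hn₁).ne'
  have hpow : z ^ del n ≠ 0 := (Real.rpow_pos_of_pos hz _).ne'
  rw [profileRatio, singularProfile, Real.rpow_neg hz.le]
  field_simp

lemma profileRatio_mul_reactiveFactor_pow_sub_one_isBigO (hn : 3 ≤ n)
    (hη : IsReactiveProfile n η) (k : ℕ) :
    (fun z => (profileRatio n η z * reactiveFactor η z) ^ k - 1) =O[atTop]
      fun z => z ^ (-2 : ℝ) :=
  isBigO_pow_sub_one (isBigO_mul_sub_one (hη.profileRatio_sub_one_isBigO hn)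
    (hη.reactiveFactor_sub_one_isBigO (by omega)) rpow_neg_two_isBigO_one)
    rpow_neg_two_isBigO_one k

lemma mul_deriv_sub_singularProfile_isBigO (hn : 3 ≤ n) (hη : IsReactiveProfile n η) :
    (fun z => z * (derivWithin η (Ici 0) z + del n * singularProfile n z / z)) =O[atTop]
      fun z => z ^ (-(del n + 2)) := by
  have hn₁ : 1 < n := by omega
  have hdel := del_pos hn₁
  refine isBigO_mul_deriv_rpow (by positivity)
    ((eventually_gt_atTop 0).mono fun z => hη.hasDerivAt₂_sub_singularProfile)
    (hη.sub_singularProfile_isBigO hn) ((singularProfile_mul_isBigO n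
      (hη.profileRatio_mul_reactiveFactor_pow_sub_one_isBigO hn n)).congr' ?_ .rfl)
  filter_upwards [eventually_gt_atTop 0] with z hz
  rw [mul_sub, mul_sub, ← sq_mul_singularProfile_pow hn₁ hz, reaction_eq_mul_reactiveFactor η hz,
    mul_assoc (z ^ 2), ← mul_pow, mul_one]
  conv_rhs => rw [← profileRatio_mul hn₁ hz η]
  field_simp

end IsReactiveProfile

/-! ### The corrector -/

/-- The factor multiplying `nδ(δ+1)h/z²` in the linearised reaction term of the corrector
equation. -/
noncomputable def correctorFactor (n : ℕ) (η : ℝ → ℝ) (z : ℝ) : ℝ :=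
  (profileRatio n η z * reactiveFactor η z) ^ (n - 1) * (2 * reactiveFactor η z - 1)

/-- The source term of the equation `z²φ₂'' = nδ(δ+1) G φ₂ + R`, with `G` the corrector factor:
the leading `z^{2-δ}` terms have been cancelled using the value of `λ₀`. -/
noncomputable def correctorSource (n : ℕ) (η : ℝ → ℝ) (z : ℝ) : ℝ :=
  z ^ (2 - del n) * (n * (del n * (del n + 1)) * lam0 n * (correctorFactor n η z - 1)
      - n * (del n * (del n + 1)) * lam n / 12
        * ((profileRatio n η z * reactiveFactor η z) ^ (n - 1) * profileRatio n η z - 1)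
      - gam n * lam n * (profileRatio n η z - 1))
    - alph n * (z ^ (2 : ℝ)
        * (z * (derivWithin η (Ici 0) z + del n * singularProfile n z / z)))

section CorrectorFactor

variable {n : ℕ} {η : ℝ → ℝ}

lemma correctorFactor_sub_one_isBigO (hn : 3 ≤ n) (hη : IsReactiveProfile n η) :
    (fun z => correctorFactor n η z - 1) =O[atTop] fun z => z ^ (-2 : ℝ) := by
  have hlinear : (fun z => 2 * reactiveFactor η z - 1 - 1) =O[atTop] fun z => z ^ (-2 : ℝ) :=
    ((hη.reactiveFactor_sub_one_isBigO (by omega)).const_mul_left 2).congr_left fun z => by ring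
  exact isBigO_mul_sub_one (hη.profileRatio_mul_reactiveFactor_pow_sub_one_isBigO hn _) hlinear
    rpow_neg_two_isBigO_one

lemma correctorSource_isBigO (hn : 3 ≤ n) (hη : IsReactiveProfile n η) :
    correctorSource n η =O[atTop] fun z => z ^ (-del n) := by
  have hratio := hη.profileRatio_sub_one_isBigO hn
  have hcubic := isBigO_mul_sub_one
    (hη.profileRatio_mul_reactiveFactor_pow_sub_one_isBigO hn (n - 1)) hratio
    rpow_neg_two_isBigO_one
  exact (isBigO_mul_rpow (eventually_gt_atTop 0) (isBigO_refl _ _)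
    ((((correctorFactor_sub_one_isBigO hn hη).const_mul_left _).sub
      (hcubic.const_mul_left _)).sub (hratio.const_mul_left _)) (by ring)).sub
    ((isBigO_mul_rpow (eventually_gt_atTop 0) (isBigO_refl _ _)
      (hη.mul_deriv_sub_singularProfile_isBigO hn) (by ring)).const_mul_left _)

lemma sq_mul_reaction_pow_pred (hn : 1 < n) {z : ℝ} (hz : 0 < z) (η : ℝ → ℝ) :
    z ^ 2 * (2 * kap * z * η z + η z ^ 2) ^ (n - 1) * (2 * kap * z)
      = del n * (del n + 1) * (profileRatio n η z * reactiveFactor η z) ^ (n - 1) := by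
  rw [← sq_mul_singularProfile_pow_pred hn hz, reaction_eq_mul_reactiveFactor η hz]
  calc z ^ 2 * (2 * kap * z * η z * reactiveFactor η z) ^ (n - 1) * (2 * kap * z)
      = z ^ 2 * (2 * kap * z * singularProfile n z
          * (profileRatio n η z * reactiveFactor η z)) ^ (n - 1) * (2 * kap * z) := by
        rw [← profileRatio_mul hn hz η]; ring
    _ = _ := by rw [mul_pow]; ring

end CorrectorFactor

namespace IsCorrector

variable {n : ℕ} {η h : ℝ → ℝ}

lemma hasDerivAt₂_phi2 (hh : IsCorrector n η h) {z : ℝ} (hz : 0 < z) :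
    HasDerivAt₂ (phi2 n h)
      (fun z => -lam0 n * ((2 - del n) * z ^ (2 - del n) / z) + derivWithin h (Ici 0) z)
      (fun z => -lam0 n * ((2 - del n) * (2 - del n - 1) * z ^ (2 - del n) / z ^ 2)
        + derivWithin (derivWithin h (Ici 0)) (Ici 0) z) z :=
  ((hasDerivAt₂_rpow hz (2 - del n)).const_mul (-lam0 n)).add
    (hasDerivAt₂_of_contDiffOn_Ici hh.1 hz)

lemma sq_mul_second_deriv (hn : 1 < n) (hh : IsCorrector n η h) {z : ℝ} (hz : 0 < z) :
    z ^ 2 * derivWithin (derivWithin h (Ici 0)) (Ici 0) z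
      = n * (del n * (del n + 1)) * (correctorFactor n η z * h z
          - (profileRatio n η z * reactiveFactor η z) ^ (n - 1) * (z ^ 2 * η z) / 12)
        - z ^ 2 * (gam n * η z + alph n * z * derivWithin η (Ici 0) z) := by
  have hkap := kap_pos
  have hreaction : (2 * kap * z + 2 * η z) * h z + 2 * kap3 * z ^ 3 * η z
      = 2 * kap * z * ((2 * reactiveFactor η z - 1) * h z - z ^ 2 * η z / 12) := by
    unfold reactiveFactor kap3
    field_simp
    ring
  have hode := hh.2.1 z hz.le
  rw [hreaction] at hode
  unfold correctorFactor
  linear_combination z ^ 2 * hode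
    + n * ((2 * reactiveFactor η z - 1) * h z - z ^ 2 * η z / 12)
      * sq_mul_reaction_pow_pred hn hz η

lemma phi2_equation (hn : 1 < n) (hh : IsCorrector n η h) {z : ℝ} (hz : 0 < z) :
    z ^ 2 * (-lam0 n * ((2 - del n) * (2 - del n - 1) * z ^ (2 - del n) / z ^ 2)
        + derivWithin (derivWithin h (Ici 0)) (Ici 0) z)
      = n * (del n * (del n + 1)) * correctorFactor n η z * phi2 n h z
        + correctorSource n η z := by
  have hsq : z ^ 2 * η z = lam n * z ^ (2 - del n) * profileRatio n η z := by
    rw [← profileRatio_mul hn hz η, singularProfile, sub_eq_add_neg, Real.rpow_add hz,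
      Real.rpow_two]
    ring
  have hsing : z ^ 2 * singularProfile n z = lam n * z ^ (2 - del n) := by
    rw [singularProfile, sub_eq_add_neg, Real.rpow_add hz, Real.rpow_two]
    ring
  rw [mul_add, hh.sq_mul_second_deriv hn hz, correctorSource, phi2, Real.rpow_two]
  have hpower : z ^ 2 * (-lam0 n * ((2 - del n) * (2 - del n - 1) * z ^ (2 - del n) / z ^ 2))
      = -lam0 n * ((2 - del n) * (2 - del n - 1) * z ^ (2 - del n)) := by field_simp
  have hderiv : z * (derivWithin η (Ici 0) z + del n * singularProfile n z / z)
      = z * derivWithin η (Ici 0) z + del n * singularProfile n z := by field_simp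
  rw [hpower, hderiv]
  linear_combination z ^ (2 - del n) * lam0_balance hn + alph n * del n * hsing
    - (gam n + n * (del n * (del n + 1)) / 12
        * (profileRatio n η z * reactiveFactor η z) ^ (n - 1)) * hsq

lemma phi2_isBigO (hn : 3 ≤ n) (hη : IsReactiveProfile n η) (hh : IsCorrector n η h) :
    phi2 n h =O[atTop] fun z => z ^ (-del n) := by
  have hn₁ : 1 < n := by omega
  have hlim : Tendsto (phi2 n h) atTop (𝓝 0) :=
    hh.2.2.2.congr fun z => by rw [phi2]; ring
  have hfactor : Tendsto (correctorFactor n η) atTop (𝓝 1) := tendsto_sub_nhds_zero_iff.1 <|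
    (correctorFactor_sub_one_isBigO hn hη).trans_tendsto (tendsto_rpow_neg_atTop two_pos)
  exact isBigO_rpow_of_euler_equation (del_pos hn₁).le (del_mul_succ_lt hn₁)
    ((eventually_gt_atTop 0).mono fun z => hh.hasDerivAt₂_phi2) hlim
    (by simpa using hfactor.const_mul (n * (del n * (del n + 1)))) (correctorSource_isBigO hn hη)
    ((eventually_gt_atTop 0).mono fun z => hh.phi2_equation hn₁)

end IsCorrector

/-! ### The diffusive profile -/

section ErrorFunction

variable {y : ℝ}

lemma mu1_nonneg (hy : 0 ≤ y) : 0 ≤ mu1 y :=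
  mul_nonneg (by positivity)
    (intervalIntegral.integral_nonneg (by positivity) fun σ _ => (Real.exp_pos _).le)

lemma mu1_le (hy : 0 ≤ y) : mu1 y ≤ kap * y := by
  have hexp : Continuous fun σ : ℝ => Real.exp (-σ ^ 2) := by fun_prop
  calc mu1 y ≤ 2 / √Real.pi * ∫ _ in (0 : ℝ)..(y / 2), (1 : ℝ) := by
        refine mul_le_mul_of_nonneg_left (intervalIntegral.integral_mono_on (by positivity)
          (hexp.intervalIntegrable _ _) (by simp) fun σ _ => ?_) (by positivity)
        exact Real.exp_le_one_iff.2 (neg_nonpos.2 (sq_nonneg σ))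
    _ = kap * y := by
        rw [intervalIntegral.integral_const, smul_eq_mul, kap]
        ring

lemma le_mu1 (hy : 0 ≤ y) : kap * y * (1 - y ^ 2 / 12) ≤ mu1 y := by
  have hexp : Continuous fun σ : ℝ => Real.exp (-σ ^ 2) := by fun_prop
  have hquad : Continuous fun σ : ℝ => 1 - σ ^ 2 := by fun_prop
  calc kap * y * (1 - y ^ 2 / 12) = 2 / √Real.pi * ∫ σ in (0 : ℝ)..(y / 2), (1 - σ ^ 2) := by
        rw [intervalIntegral.integral_sub (by simp) ((continuous_pow 2).intervalIntegrable _ _),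
          intervalIntegral.integral_const, integral_pow, smul_eq_mul, kap]
        push_cast
        ring
    _ ≤ mu1 y := by
        refine mul_le_mul_of_nonneg_left (intervalIntegral.integral_mono_on (by positivity)
          (hquad.intervalIntegrable _ _) (hexp.intervalIntegrable _ _) fun σ _ => ?_)
          (by positivity)
        linarith [Real.add_one_le_exp (-σ ^ 2)]

end ErrorFunction

/-- The ratio of `μ₁` to its linearisation `κy` at `0`. -/
noncomputable def erfFactor (y : ℝ) : ℝ := mu1 y / (kap * y)

lemma mu1_eq_mul_erfFactor {y : ℝ} (hy : 0 < y) : mu1 y = kap * y * erfFactor y :=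
  (mul_div_cancel₀ _ (mul_pos kap_pos hy).ne').symm

lemma erfFactor_sub_one_isBigO :
    (fun y => erfFactor y - 1) =O[𝓝[>] 0] fun y => y ^ (2 : ℝ) := by
  refine IsBigO.of_bound (1 / 12) (eventually_mem_nhdsWithin.mono fun y (hy : 0 < y) => ?_)
  have hky : 0 < kap * y := mul_pos kap_pos hy
  have hlower : 1 - y ^ 2 / 12 ≤ erfFactor y :=
    (le_div_iff₀' hky).2 (le_mu1 hy.le)
  have hupper : erfFactor y ≤ 1 := (div_le_one hky).2 (mu1_le hy.le)
  rw [Real.norm_eq_abs, Real.rpow_two, Real.norm_of_nonneg (sq_nonneg y), abs_le]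
  constructor <;> linarith [sq_nonneg y]

lemma tendsto_erfFactor : Tendsto erfFactor (𝓝[>] 0) (𝓝 1) := by
  refine tendsto_sub_nhds_zero_iff.1 (erfFactor_sub_one_isBigO.trans_tendsto ?_)
  simpa using (((continuous_pow 2).tendsto (0 : ℝ)).mono_left nhdsWithin_le_nhds)

/-- The coefficient `a` of `μ₃` in `y²μ₃'' + (y²/2)(yμ₃') = aμ₃ + R`. -/
noncomputable def diffusiveCoeff (n : ℕ) (μ : ℝ → ℝ) (y : ℝ) : ℝ :=
  del n * (del n + 1) * erfFactor y ^ n * (∑ i ∈ Finset.range n, profileRatio n μ y ^ i)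
    - eps n * y ^ 2

/-- The source `R` in `y²μ₃'' + (y²/2)(yμ₃') = aμ₃ + R`: the error made by the singular profile. -/
noncomputable def diffusiveSource (n : ℕ) (y : ℝ) : ℝ :=
  singularProfile n y
    * (del n * (del n + 1) * (erfFactor y ^ n - 1) + (del n / 2 - eps n) * y ^ (2 : ℝ))

lemma diffusiveSource_isBigO {n : ℕ} (hn : 4 ≤ n) :
    diffusiveSource n =O[𝓝[>] 0] (1 : ℝ → ℝ) := by
  have hfactor : (fun y => erfFactor y ^ n - 1) =O[𝓝[>] 0] fun y => y ^ (2 : ℝ) :=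
    isBigO_pow_sub_one erfFactor_sub_one_isBigO (rpow_isBigO_one_nhdsGT_zero two_pos.le) n
  exact (isBigO_mul_rpow eventually_mem_nhdsWithin (singularProfile_isBigO n _)
    ((hfactor.const_mul_left _).add (isBigO_const_mul_self _ _ _)) rfl).trans
    (rpow_isBigO_one_nhdsGT_zero (by linarith [del_le_two hn]))

namespace IsDiffusiveProfile

variable {n : ℕ} {μ : ℝ → ℝ}

lemma hasDerivAt₂ (hμ : IsDiffusiveProfile n μ) {y : ℝ} (hy : 0 < y) :
    HasDerivAt₂ μ (deriv μ) (deriv (deriv μ)) y :=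
  hasDerivAt₂_of_contDiffOn_isOpen hμ.1 isOpen_Ioi hy

lemma pos (hμ : IsDiffusiveProfile n μ) {y : ℝ} (hy : 0 < y) : 0 < μ y := hμ.2.1 y hy

lemma tendsto_profileRatio (hn : 1 < n) (hμ : IsDiffusiveProfile n μ) :
    Tendsto (profileRatio n μ) (𝓝[>] 0) (𝓝 1) := by
  have hlam := (lam_pos hn).ne'
  have hdiv := hμ.2.2.2.1.div_const (lam n)
  rw [div_self hlam] at hdiv
  refine hdiv.congr' (eventually_mem_nhdsWithin.mono fun y (hy : 0 < y) => ?_)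
  rw [profileRatio, singularProfile, Real.rpow_neg hy.le, div_mul_eq_div_div, div_inv_eq_mul,
    mul_comm (y ^ del n), div_mul_eq_mul_div]

lemma hasDerivAt₂_mu3 (hμ : IsDiffusiveProfile n μ) {y : ℝ} (hy : 0 < y) :
    HasDerivAt₂ (mu3 n μ) (fun y => deriv μ y - -del n * singularProfile n y / y)
      (fun y => deriv (deriv μ) y - del n * (del n + 1) * singularProfile n y / y ^ 2) y :=
  (hμ.hasDerivAt₂ hy).sub (hasDerivAt₂_singularProfile n hy)

lemma mu3_equation (hn : 1 < n) (hμ : IsDiffusiveProfile n μ) {y : ℝ} (hy : 0 < y) :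
    y ^ 2 * (deriv (deriv μ) y - del n * (del n + 1) * singularProfile n y / y ^ 2)
        + y ^ 2 / 2 * (y * (deriv μ y - -del n * singularProfile n y / y))
      = diffusiveCoeff n μ y * mu3 n μ y + diffusiveSource n y := by
  have hode := hμ.2.2.1 y hy
  have hreaction : 2 * mu1 y * μ y = 2 * kap * y * μ y * erfFactor y := by
    rw [mu1_eq_mul_erfFactor hy]
    ring
  have hdiff : mu3 n μ y = μ y - singularProfile n y := rfl
  rw [hreaction] at hode
  rw [diffusiveCoeff, diffusiveSource, hdiff, Real.rpow_two]
  field_simp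
  linear_combination 2 * y ^ 2 * hode
    + 2 * sq_mul_pow_sub_singularProfile hn hy μ (erfFactor y)

lemma tendsto_diffusiveCoeff (hn : 1 < n) (hμ : IsDiffusiveProfile n μ) :
    Tendsto (diffusiveCoeff n μ) (𝓝[>] 0) (𝓝 (n * (del n * (del n + 1)))) := by
  have hsq : Tendsto (fun y : ℝ => y ^ 2) (𝓝[>] 0) (𝓝 (0 ^ 2)) :=
    ((continuous_pow 2).tendsto 0).mono_left nhdsWithin_le_nhds
  have hlim : (n : ℝ) * (del n * (del n + 1))
      = del n * (del n + 1) * 1 ^ n * n - eps n * 0 ^ 2 := by ring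
  rw [hlim]
  exact (((tendsto_erfFactor.pow n).const_mul (del n * (del n + 1))).mul
    (tendsto_geom_sum_of_tendsto_one (hμ.tendsto_profileRatio hn) n)).sub
    (hsq.const_mul (eps n))

lemma mu3_isLittleO (hn : 1 < n) (hμ : IsDiffusiveProfile n μ) :
    mu3 n μ =o[𝓝[>] 0] fun y => y ^ (-del n) := by
  have hsub : (fun y => profileRatio n μ y - 1) =o[𝓝[>] 0] (1 : ℝ → ℝ) :=
    (isLittleO_one_iff ℝ).2 (tendsto_sub_nhds_zero_iff.2 (hμ.tendsto_profileRatio hn))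
  refine (hsub.mul_isBigO (singularProfile_isBigO n _)).congr' ?_ ?_ <;>
    filter_upwards [eventually_mem_nhdsWithin] with y hy
  · rw [sub_mul, profileRatio_mul hn hy, one_mul]
    rfl
  · exact one_mul _

lemma mu3_isBigO_one (hn : 4 ≤ n) (hμ : IsDiffusiveProfile n μ) :
    mu3 n μ =O[𝓝[>] 0] (1 : ℝ → ℝ) := by
  have hn₁ : 1 < n := by omega
  exact isBigO_one_of_euler_equation (del_pos hn₁).le (del_mul_succ_lt hn₁)
    (eventually_mem_nhdsWithin.mono fun y => hμ.hasDerivAt₂_mu3) (hμ.mu3_isLittleO hn₁)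
    (hμ.tendsto_diffusiveCoeff hn₁) (.of_forall fun y => by positivity)
    (diffusiveSource_isBigO hn)
    (eventually_mem_nhdsWithin.mono fun y => hμ.mu3_equation hn₁)

lemma tendsto_sub_one_rpow_mul (hn : 1 < n) (hμ : IsDiffusiveProfile n μ) :
    Tendsto (fun y => (y - 1) ^ (2 * eps n) * μ y) atTop (𝓝 0) := by
  have := eps_pos hn
  refine squeeze_zero' ?_ ?_ hμ.2.2.2.2 <;>
    filter_upwards [eventually_ge_atTop 1] with y hy <;>
    have hμy := hμ.pos (zero_lt_one.trans_le hy)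
  · have := Real.rpow_nonneg (sub_nonneg.2 hy) (2 * eps n)
    positivity
  · gcongr
    exact sub_le_self y zero_le_one

lemma hasDerivAt₂_sub_one_rpow_mul (hμ : IsDiffusiveProfile n μ) (q : ℝ) {y : ℝ} (hy : 1 < y) :
    HasDerivAt₂ (fun y => (y - 1) ^ q * μ y)
      (fun y => q * (y - 1) ^ q / (y - 1) * μ y + (y - 1) ^ q * deriv μ y)
      (fun y => q * (q - 1) * (y - 1) ^ q / (y - 1) ^ 2 * μ y
        + 2 * (q * (y - 1) ^ q / (y - 1) * deriv μ y) + (y - 1) ^ q * deriv (deriv μ) y) y := by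
  have hy' : 0 < y + -1 := by linarith
  exact (hasDerivAt₂_rpow hy' q).comp_add_const.mul (hμ.hasDerivAt₂ (by linarith))

lemma sub_one_rpow_mul_equation (hμ : IsDiffusiveProfile n μ) {y : ℝ} (hy : 1 < y) :
    2 * eps n * (2 * eps n - 1) * (y - 1) ^ (2 * eps n) / (y - 1) ^ 2 * μ y
        + 2 * (2 * eps n * (y - 1) ^ (2 * eps n) / (y - 1) * deriv μ y)
        + (y - 1) ^ (2 * eps n) * deriv (deriv μ) y
        + (y / 2 - 4 * eps n / (y - 1))
          * (2 * eps n * (y - 1) ^ (2 * eps n) / (y - 1) * μ y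
            + (y - 1) ^ (2 * eps n) * deriv μ y)
      = (y - 1) ^ (2 * eps n) * ((2 * mu1 y * μ y) ^ n
          + eps n * (y - 1 - 4 * eps n - 2) / (y - 1) ^ 2 * μ y) := by
  have : y - 1 ≠ 0 := by linarith
  rw [← hμ.2.2.1 y (zero_lt_one.trans hy)]
  field_simp
  ring

/- In the equation for `m = (y - 1)^{2ε} μ` the shift by `1` makes the zeroth order coefficient
nonnegative for large `y`, and the drift `y/2 - 4ε/(y - 1)` is unbounded: every power of `y` is then
a supersolution. -/
lemma eventually_sub_one_rpow_mul_le (hn : 1 < n) (hμ : IsDiffusiveProfile n μ) {p : ℝ}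
    (hp : 0 < p) :
    ∃ K, ∀ᶠ y in atTop, (y - 1) ^ (2 * eps n) * μ y ≤ K * y ^ (-p) := by
  have heps := eps_pos hn
  have hdrift : Tendsto (fun y => p * (y * (y / 2 - 4 * eps n / (y - 1)))) atTop atTop := by
    have hinv : Tendsto (fun y => 4 * eps n / (y - 1)) atTop (𝓝 0) :=
      (tendsto_atTop_add_const_right _ (-1) tendsto_id).const_div_atTop _
    exact (tendsto_id.atTop_mul_atTop₀ ((tendsto_id.atTop_div_const two_pos).atTop_add
      hinv.neg)).const_mul_atTop hp
  refine eventually_le_rpow_of_euler_inequality (a := 0) (C := 0) (lt_add_one _)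
    ((eventually_gt_atTop 1).mono fun y => hμ.hasDerivAt₂_sub_one_rpow_mul _)
    (hμ.tendsto_sub_one_rpow_mul hn) (.of_forall fun _ => le_rfl)
    ((hdrift.eventually_ge_atTop _).mono fun y => (zero_add _).ge.trans') ?_
  filter_upwards [eventually_gt_atTop 1, eventually_ge_atTop (4 * eps n + 3)] with y hy hy'
  have : 0 < y - 1 := sub_pos.2 hy
  have hμy := hμ.pos (zero_lt_one.trans hy)
  have hmu1 := mu1_nonneg (zero_le_one.trans hy.le)
  have hcoeff : 0 ≤ y - 1 - 4 * eps n - 2 := by linarith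
  have hode := hμ.sub_one_rpow_mul_equation hy
  have hnonneg : 0 ≤ (y - 1) ^ (2 * eps n) * ((2 * mu1 y * μ y) ^ n
      + eps n * (y - 1 - 4 * eps n - 2) / (y - 1) ^ 2 * μ y) := by positivity
  rw [← hode] at hnonneg
  simp only [Pi.zero_apply, zero_mul, sub_zero]
  exact (mul_nonneg (sq_nonneg y) hnonneg).trans_eq (by ring)

lemma isBigO_rpow (hn : 1 < n) (hμ : IsDiffusiveProfile n μ) {p : ℝ} (hp : 0 < p) :
    μ =O[atTop] fun y => y ^ (-p) := by
  have heps := eps_pos hn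
  obtain ⟨K, hK⟩ := hμ.eventually_sub_one_rpow_mul_le hn hp
  refine IsBigO.of_bound K ?_
  filter_upwards [hK, eventually_ge_atTop 2] with y hy hy2
  have hμy := hμ.pos (zero_lt_two.trans_le hy2)
  rw [Real.norm_of_nonneg hμy.le, Real.norm_of_nonneg (Real.rpow_nonneg (by linarith) _)]
  exact (le_mul_of_one_le_left hμy.le
    (Real.one_le_rpow (by linarith) (by positivity))).trans hy

lemma mu3_isBigO_rpow (hn : 1 < n) (hμ : IsDiffusiveProfile n μ) :
    mu3 n μ =O[atTop] fun y => y ^ (-del n) :=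
  (hμ.isBigO_rpow hn (del_pos hn)).sub (singularProfile_isBigO n atTop)

end IsDiffusiveProfile

/-! ### Uniform bounds in the similarity variables -/

lemma IsReactiveProfile.exists_rpow_mul_abs_le {n : ℕ} {η : ℝ → ℝ} (hn : 1 < n)
    (hη : IsReactiveProfile n η) :
    ∃ C, ∀ ν ∈ Icc 0 (del n), ∀ z ≥ 0, z ^ ν * |η z| ≤ C :=
  _root_.exists_rpow_mul_abs_le (del_pos hn).le (hη.1.continuousOn.mono Ioi_subset_Ici_self)
    (hη.tendsto_nhdsGT_zero.isBigO_one ℝ) (hη.isBigO_rpow hn)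

lemma IsDiffusiveProfile.exists_rpow_mul_abs_mu3_le {n : ℕ} {μ : ℝ → ℝ} (hn : 4 ≤ n)
    (hμ : IsDiffusiveProfile n μ) :
    ∃ C, ∀ ν ∈ Icc 0 (del n), ∀ y ≥ 0, y ^ ν * |mu3 n μ y| ≤ C :=
  exists_rpow_mul_abs_le (del_pos (by omega)).le
    (fun _ hy => (hμ.hasDerivAt₂_mu3 hy).1.continuousAt.continuousWithinAt)
    (hμ.mu3_isBigO_one hn) (hμ.mu3_isBigO_rpow (by omega))

lemma IsCorrector.exists_rpow_mul_abs_phi2_le {n : ℕ} {η h : ℝ → ℝ} (hn : 4 ≤ n)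
    (hη : IsReactiveProfile n η) (hh : IsCorrector n η h) :
    ∃ C, ∀ ν ∈ Icc 0 (del n), ∀ z ≥ 0, z ^ ν * |phi2 n h z| ≤ C := by
  have hzero : Tendsto h (𝓝[>] 0) (𝓝 (h 0)) :=
    (hh.1.continuousOn 0 self_mem_Ici).mono_left (nhdsWithin_mono _ Ioi_subset_Ici_self)
  exact exists_rpow_mul_abs_le (del_pos (by omega)).le
    (fun _ hz => (hh.hasDerivAt₂_phi2 hz).1.continuousAt.continuousWithinAt)
    (((rpow_isBigO_one_nhdsGT_zero (sub_nonneg.2 (del_le_two hn))).const_mul_left _).add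
      (hzero.isBigO_one ℝ))
    (hh.phi2_isBigO (by omega) hη)

section SimilarityVariables

variable {n : ℕ} {t : ℝ}

lemma div_sqrt_mul_rpow_gam (n : ℕ) (ht : 0 < t) (r : ℝ) :
    r / √t * t ^ gam n = r / t ^ alph n := by
  rw [alph, Real.rpow_sub ht, ← Real.sqrt_eq_rpow, div_div_eq_mul_div, mul_div_right_comm]

lemma rpow_neg_eps_mul_rpow_le (hn : 1 < n) (ht : 1 ≤ t) {r ν : ℝ} (hr : 0 ≤ r)
    (hν : ν ≤ del n) :
    t ^ (-eps n) * (r / t ^ alph n) ^ ν ≤ t ^ (-gam n) * (r / √t) ^ ν := by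
  have ht₀ : 0 < t := zero_lt_one.trans_le ht
  have hexp : gam n * ν + -eps n ≤ -gam n := by
    rw [← gam_mul_one_add_del hn]
    linarith [mul_le_mul_of_nonneg_left hν (gam_pos n).le]
  calc t ^ (-eps n) * (r / t ^ alph n) ^ ν
      = t ^ (gam n * ν + -eps n) * (r / √t) ^ ν := by
        rw [← div_sqrt_mul_rpow_gam n ht₀, Real.mul_rpow (by positivity) (by positivity),
          ← Real.rpow_mul ht₀.le, Real.rpow_add ht₀]
        ring
    _ ≤ t ^ (-gam n) * (r / √t) ^ ν := by gcongr

lemma ubar_nonneg (x t : ℝ) : 0 ≤ ubar x t := mu1_nonneg (by positivity)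

lemma ubar_le (n : ℕ) (ht : 0 < t) (x : ℝ) :
    ubar x t ≤ kap * (|x| / t ^ alph n * t ^ (-gam n)) := by
  refine (mu1_le (by positivity)).trans_eq ?_
  rw [← div_sqrt_mul_rpow_gam n ht, mul_assoc (|x| / √t), ← Real.rpow_add ht, add_neg_cancel,
    Real.rpow_zero, mul_one]

lemma exists_rpow_mul_abs_phiFun_le (hn : 4 ≤ n) {η μ h : ℝ → ℝ} (hη : IsReactiveProfile n η)
    (hμ : IsDiffusiveProfile n μ) (hh : IsCorrector n η h) :
    ∃ C > 0, ∀ ν ∈ Icc 0 (del n), ∀ t ≥ 1, ∀ x,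
      (|x| / t ^ alph n) ^ ν * |phiFun n η μ h x t| ≤ C * t ^ (-gam n) := by
  have hn₁ : 1 < n := by omega
  obtain ⟨A, hA⟩ := hη.exists_rpow_mul_abs_le hn₁
  obtain ⟨B, hB⟩ := hμ.exists_rpow_mul_abs_mu3_le hn
  obtain ⟨D, hD⟩ := hh.exists_rpow_mul_abs_phi2_le hn hη
  refine ⟨max (A + B + D) 1, by positivity, fun ν hν t ht x => ?_⟩
  have ht₀ : 0 < t := zero_lt_one.trans_le ht
  have htime : t ^ (-(3 * gam n)) ≤ t ^ (-gam n) :=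
    Real.rpow_le_rpow_of_exponent_le ht (by linarith [gam_pos n])
  have hscale := rpow_neg_eps_mul_rpow_le hn₁ ht (abs_nonneg x) hν.2
  set z := |x| / t ^ alph n
  set y := |x| / √t
  have hy₀ : 0 ≤ y := by positivity
  have hz₀ : 0 ≤ z := by positivity
  calc z ^ ν * |phiFun n η μ h x t|
      ≤ z ^ ν * (|t ^ (-gam n) * η z| + |t ^ (-eps n) * mu3 n μ y|
          + |t ^ (-(3 * gam n)) * phi2 n h z|) := by
        gcongr
        exact abs_add_three _ _ _
    _ = t ^ (-gam n) * (z ^ ν * |η z|) + t ^ (-eps n) * z ^ ν * |mu3 n μ y|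
          + t ^ (-(3 * gam n)) * (z ^ ν * |phi2 n h z|) := by
        simp only [abs_mul, abs_of_nonneg (Real.rpow_nonneg ht₀.le _)]
        ring
    _ ≤ t ^ (-gam n) * (z ^ ν * |η z|) + t ^ (-gam n) * y ^ ν * |mu3 n μ y|
          + t ^ (-gam n) * (z ^ ν * |phi2 n h z|) := by gcongr
    _ ≤ t ^ (-gam n) * A + t ^ (-gam n) * B + t ^ (-gam n) * D := by
        rw [mul_assoc _ (y ^ ν)]
        gcongr
        exacts [hA ν hν z hz₀, hB ν hν y hy₀, hD ν hν z hz₀]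
    _ = (A + B + D) * t ^ (-gam n) := by ring
    _ ≤ max (A + B + D) 1 * t ^ (-gam n) := by
        gcongr
        exact le_max_left _ _

end SimilarityVariables

lemma abs_two_mul_mul_add_sq_le {u f k z C G : ℝ} (hk : 0 ≤ k) (hG : 0 ≤ G) (hu : 0 ≤ u)
    (huz : u ≤ k * (z * G)) (hf : |f| ≤ C * G) (hzf : z * |f| ≤ C * G) :
    |2 * u * f + f ^ 2| ≤ (2 * k * C + C ^ 2) * G ^ 2 := by
  calc |2 * u * f + f ^ 2| ≤ |2 * u * f| + |f ^ 2| := abs_add_le _ _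
    _ = 2 * (u * |f|) + |f| ^ 2 := by
        rw [abs_mul, abs_of_nonneg (mul_nonneg zero_le_two hu), abs_pow, mul_assoc]
    _ ≤ 2 * (k * (z * G) * |f|) + (C * G) ^ 2 := by gcongr
    _ = 2 * (k * G * (z * |f|)) + (C * G) ^ 2 := by ring
    _ ≤ 2 * (k * G * (C * G)) + (C * G) ^ 2 := by gcongr
    _ = (2 * k * C + C ^ 2) * G ^ 2 := by ring

/-- Uniform bounds on the correction φ: for 0 ≤ ν ≤ δ,
(|x|/t^α)^ν |φ(x,t)| ≤ c t^{−γ}, and |2ūφ + φ²| ≤ c' t^{−2γ}, for all t ≥ 1. -/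
theorem phi_uniform_bounds (n : ℕ) (hn : 4 ≤ n) (η μ h : ℝ → ℝ)
    (hη : IsReactiveProfile n η) (hμ : IsDiffusiveProfile n μ) (hh : IsCorrector n η h) :
    (∀ ν : ℝ, 0 ≤ ν → ν ≤ del n → ∃ c : ℝ, 0 < c ∧ ∀ t ≥ (1 : ℝ), ∀ x : ℝ,
      (|x| / t ^ alph n) ^ ν * |phiFun n η μ h x t| ≤ c * t ^ (-(gam n))) ∧
    (∃ c' : ℝ, 0 < c' ∧ ∀ t ≥ (1 : ℝ), ∀ x : ℝ,
      |2 * ubar x t * phiFun n η μ h x t + phiFun n η μ h x t ^ 2|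
        ≤ c' * t ^ (-(2 * gam n))) := by
  obtain ⟨C, hC, hbound⟩ := exists_rpow_mul_abs_phiFun_le hn hη hμ hh
  refine ⟨fun ν hν₀ hν => ⟨C, hC, hbound ν ⟨hν₀, hν⟩⟩,
    2 * kap * C + C ^ 2, by have := kap_pos; positivity, fun t ht x => ?_⟩
  have ht₀ : 0 < t := zero_lt_one.trans_le ht
  have hdel : 1 < del n := one_lt_del (by omega)
  have hunweighted := hbound 0 ⟨le_rfl, by linarith⟩ t ht x
  have hlinear := hbound 1 ⟨zero_le_one, hdel.le⟩ t ht x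
  rw [Real.rpow_zero, one_mul] at hunweighted
  rw [Real.rpow_one] at hlinear
  have hsq : t ^ (-(2 * gam n)) = (t ^ (-gam n)) ^ 2 := by
    rw [← Real.rpow_mul_natCast ht₀.le]
    congr 1
    push_cast
    ring
  rw [hsq]
  exact abs_two_mul_mul_add_sq_le kap_pos.le (by positivity) (ubar_nonneg x t)
    (ubar_le n ht₀ x) hunweighted hlinear
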